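/- arXiv:2405.11148 — 2 statements merged into one kernel-verified Lean document; each statement's English description precedes it below -/
import Mathlib

section
/- Let X be a locally compact Polish space with compatible metric d, and let G be a group of homeomorphisms of X such that: (i) the family {φ : φ ∈ G} is equicontinuous on every compact subset of X; (ii) for every t ∈ X the orbit {φ(t) : φ ∈ G} is nowhere dense in X; (iii) G is relatively SOT-closed, meaning that whenever a sequence of composition operators C_{φₙ} with φₙ ∈ G converges in the strong operator topology to a surjective lattice isometry T of (C₀(X), ‖·‖_∞), then T = C_φ for some φ ∈ G. Then for every C > 1 there exists a norm N on C₀(X) such that: N is a lattice norm (|x| ≤ |y| implies N(x) ≤ N(y)); ‖x‖_∞ ≤ N(x) ≤ C‖x‖_∞ for all x ∈ C₀(X); every composition operator C_φ with φ ∈ G satisfies N(C_φ x) = N(x) for all x; and conversely every lattice isomorphism T of C₀(X) satisfying N(T x) = N(x) for all x equals C_φ for some φ ∈ G. -/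
open ZeroAtInfty Filter Topology Metric

noncomputable section

/-- Pointwise supremum of two continuous functions vanishing at infinity. -/
def c0sup {X : Type*} [TopologicalSpace X] (f g : C₀(X, ℝ)) : C₀(X, ℝ) where
  toFun := fun t => max (f t) (g t)
  continuous_toFun := (map_continuous f).max (map_continuous g)
  zero_at_infty' := by simpa using (zero_at_infty f).max (zero_at_infty g)

/-- Composition operator `f ↦ f ∘ φ` on `C₀(X)` induced by a homeomorphism `φ`. -/
def compOp {X : Type*} [TopologicalSpace X] (φ : X ≃ₜ X) (f : C₀(X, ℝ)) : C₀(X, ℝ) where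
  toFun := fun t => f (φ t)
  continuous_toFun := (map_continuous f).comp φ.continuous
  zero_at_infty' := (zero_at_infty f).comp φ.map_cocompact.le


@[simp] lemma c0sup_apply' {X : Type*} [TopologicalSpace X] (f g : C₀(X, ℝ)) (t : X) :
    c0sup f g t = max (f t) (g t) := rfl

@[simp] lemma compOp_apply' {X : Type*} [TopologicalSpace X] (φ : X ≃ₜ X) (f : C₀(X, ℝ)) (t : X) :
    compOp φ f t = f (φ t) := rfl

lemma c0_abs_le {X : Type*} [TopologicalSpace X] (f : C₀(X, ℝ)) (t : X) : |f t| ≤ ‖f‖ := by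
  rw [← ZeroAtInftyContinuousMap.norm_toBCF_eq_norm]
  exact f.toBCF.norm_coe_le_norm t

lemma c0_norm_le {X : Type*} [TopologicalSpace X] (f : C₀(X, ℝ)) {M : ℝ} (hM : 0 ≤ M)
    (h : ∀ t, |f t| ≤ M) : ‖f‖ ≤ M := by
  rw [← ZeroAtInftyContinuousMap.norm_toBCF_eq_norm]
  exact (BoundedContinuousFunction.norm_le hM).2 h

lemma c0_bump {X : Type*} [TopologicalSpace X] [LocallyCompactSpace X] [T2Space X]
    (p : X) (V : Set X) (hV : V ∈ 𝓝 p) :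
    ∃ f : C₀(X, ℝ), f p = 1 ∧ (∀ s, s ∉ V → f s = 0) ∧ ∀ s, 0 ≤ f s ∧ f s ≤ 1 := by
  obtain ⟨f, h1, h0, hc, h⟩ := exists_continuous_one_zero_of_isCompact (X := X)
    (s := {p}) (t := (interior V)ᶜ) isCompact_singleton isOpen_interior.isClosed_compl
    (by simpa [Set.disjoint_left] using mem_interior_iff_mem_nhds.2 hV)
  refine ⟨⟨f, hc.is_zero_at_infty⟩, h1 rfl, fun s hs => h0 (fun h' => hs (interior_subset h')), h⟩

/-- Representation of nonzero lattice homomorphisms to the reals. -/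
lemma lattice_functional {X : Type*} [TopologicalSpace X] [LocallyCompactSpace X] [T2Space X]
    (L : C₀(X, ℝ) →L[ℝ] ℝ) (hL : ∀ f g, L (c0sup f g) = max (L f) (L g)) (hne : L ≠ 0) :
    ∃ w : ℝ, 0 < w ∧ ∃ s : X, ∀ f, L f = w * f s := by
  have habs : ∀ f : C₀(X, ℝ), L (c0sup f (-f)) = |L f| := by
    intro f; rw [hL, map_neg]; rfl
  have key : ∃ s : X, ∀ f, L f = 0 → f s = 0 := by
    by_contra hcon
    push Not at hcon
    apply hne
    have hpos : ∀ f : C₀(X, ℝ), (∀ t, 0 ≤ f t) → L f = 0 := by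
      intro f hf
      have h1 : 0 ≤ L f := by
        have : c0sup f 0 = f := by ext t; simp [hf t]
        rw [← this, hL]; simp
      have hF : ∀ s : X, ∃ g : C₀(X, ℝ), L g = 0 ∧ (∀ t, 0 ≤ g t) ∧ ‖f‖ < g s := by
        intro s
        obtain ⟨g, hg, hgs⟩ := hcon s
        have hp : 0 < |g s| := abs_pos.2 hgs
        refine ⟨((‖f‖ + 1) / |g s|) • c0sup g (-g), ?_, ?_, ?_⟩
        · rw [map_smul, habs, hg]; simp
        · intro t
          have : 0 ≤ max (g t) (-g t) := abs_nonneg (g t)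
          simp only [ZeroAtInftyContinuousMap.smul_apply, c0sup_apply',
            ZeroAtInftyContinuousMap.neg_apply, smul_eq_mul]
          positivity
        · have : max (g s) (-g s) = |g s| := rfl
          simp only [ZeroAtInftyContinuousMap.smul_apply, c0sup_apply',
            ZeroAtInftyContinuousMap.neg_apply, smul_eq_mul, this]
          rw [div_mul_cancel₀ _ hp.ne']; linarith
      choose g hg0 hgn hgs using hF
      refine le_antisymm (le_of_forall_pos_le_add fun η hη => ?_) h1
      have hη' : 0 < η / (‖L‖ + 1) := by positivity
      set κ := η / (‖L‖ + 1) with hκ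
      have hev : ∀ᶠ t in cocompact X, |f t| < κ := by
        have := (zero_at_infty f).eventually (Metric.ball_mem_nhds (0:ℝ) hη')
        simpa using this
      obtain ⟨K, hK, hKs⟩ := mem_cocompact.1 hev
      obtain ⟨S, -, hS⟩ := hK.elim_nhds_subcover (fun s => {x | ‖f‖ < g s x}) (fun s _ =>
        (isOpen_lt continuous_const (map_continuous (g s))).mem_nhds (hgs s))
      set F : C₀(X, ℝ) := ∑ s ∈ S, g s with hFdef
      have hFt : ∀ t, F t = ∑ s ∈ S, g s t := by
        intro t
        have : ∀ S : Finset X, (∑ s ∈ S, g s) t = ∑ s ∈ S, g s t := by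
          intro S
          classical
          induction S using Finset.induction_on with
          | empty => simp
          | insert a S ha ih => rw [Finset.sum_insert ha, Finset.sum_insert ha]; simp [ih]
        exact this S
      have hLF : L F = 0 := by
        rw [hFdef, map_sum]; exact Finset.sum_eq_zero (fun s _ => hg0 s)
      have hFn : ∀ t, 0 ≤ F t := fun t => by
        rw [hFt]; exact Finset.sum_nonneg (fun s _ => hgn s t)
      have hFK : ∀ t ∈ K, f t ≤ F t := by
        intro t ht
        obtain ⟨s, hs, hts⟩ := Set.mem_iUnion₂.1 (hS ht)
        have h2 : g s t ≤ F t := by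
          rw [hFt]; exact Finset.single_le_sum (f := fun s => g s t) (fun s _ => hgn s t) hs
        have h3 := le_trans (le_abs_self _) (c0_abs_le f t)
        have h4 : ‖f‖ < g s t := hts
        linarith
      set h : C₀(X, ℝ) := c0sup (-f) (-F) with hh
      have hLh : L h = 0 := by
        rw [hh, hL, map_neg, map_neg, hLF]; simp [h1]
      have hn : ‖f + h‖ ≤ κ := by
        apply c0_norm_le _ hη'.le
        intro t
        have e : (f + h) t = max 0 (f t - F t) := by
          simp only [hh, ZeroAtInftyContinuousMap.add_apply, c0sup_apply',
            ZeroAtInftyContinuousMap.neg_apply]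
          rw [← max_add_add_left]; congr 1 <;> ring
        rw [e, abs_of_nonneg (le_max_left _ _)]
        by_cases ht : t ∈ K
        · rw [max_eq_left (by linarith [hFK t ht])]; exact hη'.le
        · have : |f t| < κ := hKs ht
          apply max_le hη'.le
          linarith [le_abs_self (f t), hFn t]
      have h5 : L f = L (f + h) := by rw [map_add, hLh, add_zero]
      rw [h5, zero_add]
      calc L (f + h) ≤ ‖L (f + h)‖ := le_abs_self _
        _ ≤ ‖L‖ * ‖f + h‖ := L.le_opNorm _
        _ ≤ ‖L‖ * κ := by gcongr
        _ ≤ (‖L‖ + 1) * κ := by gcongr; linarith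
        _ = η := by rw [hκ]; field_simp
    ext f
    have := hpos (c0sup f (-f)) (fun t => abs_nonneg (f t))
    rw [habs] at this
    simpa using this
  obtain ⟨s, hs⟩ := key
  obtain ⟨b, hb1, -, hb⟩ := c0_bump s Set.univ univ_mem
  have hLb : L b ≠ 0 := fun h => by
    have := hs b h; rw [hb1] at this; exact one_ne_zero this
  have hLb0 : 0 ≤ L b := by
    have : c0sup b 0 = b := by ext t; simp [(hb t).1]
    rw [← this, hL]; simp
  refine ⟨L b, lt_of_le_of_ne hLb0 hLb.symm, s, fun f => ?_⟩
  have := hs (f - (L f / L b) • b) (by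
    rw [map_sub, map_smul, smul_eq_mul, div_mul_cancel₀ _ hLb, sub_self])
  simp only [ZeroAtInftyContinuousMap.sub_apply, ZeroAtInftyContinuousMap.smul_apply,
    smul_eq_mul, hb1, mul_one] at this
  rw [sub_eq_zero.1 this]; field_simp

lemma lattice_rep_point {X : Type*} [TopologicalSpace X] [LocallyCompactSpace X] [T2Space X]
    (T : C₀(X, ℝ) ≃L[ℝ] C₀(X, ℝ)) (hT : ∀ f g, T (c0sup f g) = c0sup (T f) (T g)) (t : X) :
    ∃ w : ℝ, 0 < w ∧ ∃ s : X, ∀ f, T f t = w * f s := by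
  let ev : C₀(X, ℝ) →L[ℝ] ℝ := LinearMap.mkContinuous
    { toFun := fun f => f t
      map_add' := fun _ _ => rfl
      map_smul' := fun _ _ => rfl } 1 (fun f => by
        rw [one_mul]; exact c0_abs_le f t)
  have hev : ∀ f, ev f = f t := fun _ => rfl
  obtain ⟨w, hw, s, h⟩ := lattice_functional (ev.comp (T : C₀(X, ℝ) →L[ℝ] C₀(X, ℝ)))
    (fun f g => by simp [hev, hT]) (fun h0 => by
      obtain ⟨b, hb1, -, -⟩ := c0_bump t Set.univ univ_mem
      have := congrArg (fun L => L (T.symm b)) h0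
      simp [hev, hb1] at this)
  exact ⟨w, hw, s, fun f => h f⟩

lemma c0_eq_of_mul {X : Type*} [TopologicalSpace X] [LocallyCompactSpace X] [T2Space X]
    {p q : X} {c : ℝ} (h : ∀ f : C₀(X, ℝ), f p = c * f q) : p = q ∧ c = 1 := by
  have hpq : p = q := by
    by_contra hne
    obtain ⟨b, hb1, hb0, -⟩ := c0_bump p {q}ᶜ (isOpen_compl_singleton.mem_nhds hne)
    have := h b
    rw [hb1, hb0 q (by simp)] at this
    simp at this
  refine ⟨hpq, ?_⟩
  obtain ⟨b, hb1, -, -⟩ := c0_bump p Set.univ univ_mem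
  have := h b
  rw [← hpq, hb1] at this
  linarith

lemma symm_lattice {X : Type*} [TopologicalSpace X]
    (T : C₀(X, ℝ) ≃L[ℝ] C₀(X, ℝ)) (hT : ∀ f g, T (c0sup f g) = c0sup (T f) (T g)) :
    ∀ f g, T.symm (c0sup f g) = c0sup (T.symm f) (T.symm g) := by
  intro f g
  apply T.injective
  rw [hT]; simp

lemma rep_continuous {X : Type*} [TopologicalSpace X] [LocallyCompactSpace X] [T2Space X]
    (T : C₀(X, ℝ) → C₀(X, ℝ)) (w : X → ℝ) (hw : ∀ t, 0 < w t) (ψ : X → X)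
    (h : ∀ t f, T f t = w t * f (ψ t)) : Continuous ψ := by
  rw [continuous_iff_continuousAt]
  intro t V hV
  obtain ⟨b, hb1, hb0, -⟩ := c0_bump (ψ t) V hV
  have h1 : 0 < T b t := by rw [h, hb1, mul_one]; exact hw t
  have h2 : ∀ᶠ u in 𝓝 t, 0 < T b u := (map_continuous (T b)).continuousAt.eventually (lt_mem_nhds h1)
  rw [mem_map]
  filter_upwards [h2] with u hu
  by_contra hn
  rw [Set.mem_preimage] at hn
  rw [h, hb0 _ hn] at hu
  simp at hu

/-- Representation of lattice isomorphisms as weighted composition operators. -/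
lemma lattice_rep {X : Type*} [TopologicalSpace X] [LocallyCompactSpace X] [T2Space X]
    (T : C₀(X, ℝ) ≃L[ℝ] C₀(X, ℝ)) (hT : ∀ f g, T (c0sup f g) = c0sup (T f) (T g)) :
    ∃ (ψ : X ≃ₜ X) (w w' : X → ℝ), (∀ t, 0 < w t) ∧ (∀ t, 0 < w' t) ∧
      (∀ t f, T f t = w t * f (ψ t)) ∧ (∀ t f, T.symm f t = w' t * f (ψ.symm t)) ∧
      (∀ t, w t * w' (ψ t) = 1) := by
  choose w hw ψ hψ using lattice_rep_point T hT
  choose w' hw' ψ' hψ' using lattice_rep_point T.symm (symm_lattice T hT)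
  have e1 : ∀ t, ψ' (ψ t) = t ∧ w t * w' (ψ t) = 1 := by
    intro t
    have := c0_eq_of_mul (p := t) (q := ψ' (ψ t)) (c := w t * w' (ψ t)) (fun f => by
      have := hψ t (T.symm f)
      rw [hψ', T.apply_symm_apply] at this
      rw [this]; ring)
    exact ⟨this.1.symm, this.2⟩
  have e2 : ∀ t, ψ (ψ' t) = t := by
    intro t
    have := c0_eq_of_mul (p := t) (q := ψ (ψ' t)) (c := w' t * w (ψ' t)) (fun f => by
      have := hψ' t (T f)
      rw [hψ, T.symm_apply_apply] at this
      rw [this]; ring)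
    exact this.1.symm
  refine ⟨⟨⟨ψ, ψ', fun t => (e1 t).1, e2⟩, rep_continuous T w hw ψ hψ,
    rep_continuous T.symm w' hw' ψ' hψ'⟩, w, w', hw, hw', hψ, hψ', fun t => (e1 t).2⟩

/-- Rapidly decaying weights. -/
lemma exists_weights (C : ℝ) (hC : 1 < C) : ∃ a : ℕ → ℝ, a 0 = 1 ∧ (∀ k, 0 < a k) ∧ Antitone a ∧
    Summable a ∧ ∑' k, a k ≤ C ∧ ∀ m, ∑' k, a (k + (m + 1)) < a m * (1 / 2) ^ m / 4 := by
  set r : ℝ := min (1 / 16) ((C - 1) / 2) with hr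
  have hr0 : 0 < r := lt_min (by norm_num) (by linarith)
  have hr1 : r ≤ 1 / 16 := min_le_left _ _
  have hr2 : r ≤ (C - 1) / 2 := min_le_right _ _
  have hgeo : Summable (fun k : ℕ => r ^ k) := summable_geometric_of_lt_one hr0.le (by linarith)
  have hbound : ∀ m k : ℕ, r ^ ((k + (m + 1)) ^ 2) ≤ r ^ ((m + 1) ^ 2) * r ^ k := by
    intro m k
    rw [← pow_add]
    apply pow_le_pow_of_le_one hr0.le (by linarith)
    nlinarith [Nat.zero_le (k * k), Nat.zero_le (k * m)]
  have hsum : Summable (fun k : ℕ => r ^ (k ^ 2)) := by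
    refine Summable.of_nonneg_of_le (fun k => by positivity) (fun k => ?_) hgeo
    apply pow_le_pow_of_le_one hr0.le (by linarith)
    nlinarith
  have htail : ∀ m : ℕ, ∑' k, r ^ ((k + (m + 1)) ^ 2) ≤ r ^ ((m + 1) ^ 2) * 2 := by
    intro m
    calc ∑' k, r ^ ((k + (m + 1)) ^ 2) ≤ ∑' k, r ^ ((m + 1) ^ 2) * r ^ k := by
          apply Summable.tsum_le_tsum (hbound m) ?_ (hgeo.mul_left _)
          exact (summable_nat_add_iff (f := fun k : ℕ => r ^ (k ^ 2)) (m + 1)).2 hsum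
      _ = r ^ ((m + 1) ^ 2) * (1 - r)⁻¹ := by
          rw [tsum_mul_left, tsum_geometric_of_lt_one hr0.le (by linarith)]
      _ ≤ _ := by
          gcongr
          rw [inv_le_comm₀ (by linarith) (by norm_num)]; linarith
  refine ⟨fun k => r ^ (k ^ 2), by simp, fun k => by positivity, ?_, hsum, ?_, ?_⟩
  · intro i j hij
    apply pow_le_pow_of_le_one hr0.le (by linarith)
    gcongr
  · have h0 := hsum.sum_add_tsum_nat_add 1
    have := htail 0
    simp at h0 this
    rw [← h0]; linarith
  · intro m
    refine (htail m).trans_lt ?_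
    have e : r ^ ((m + 1) ^ 2) = r ^ (m ^ 2) * (r * (r ^ 2) ^ m) := by
      rw [← pow_mul, ← pow_succ', ← pow_add]; congr 1; ring
    have h1 : (r ^ 2) ^ m ≤ (1 / 2) ^ m := by
      apply pow_le_pow_left₀ (by positivity); nlinarith
    have h2 : 0 < r ^ (m ^ 2) := by positivity
    have h3 : (0:ℝ) < (1 / 2) ^ m := by positivity
    rw [e]
    show r ^ (m ^ 2) * (r * (r ^ 2) ^ m) * 2 < r ^ (m ^ 2) * (1 / 2) ^ m / 4
    have h4 : r * (r ^ 2) ^ m ≤ 1 / 16 * (1 / 2) ^ m := by gcongr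
    nlinarith [mul_pos h2 h3]

/-- The combinatorial heart: labels are recovered from almost extremal configurations. -/
lemma labels (a : ℕ → ℝ) (ha : ∀ k, 0 < a k) (hanti : Antitone a) (hs : Summable a)
    (ht : ∀ m, ∑' k, a (k + (m + 1)) < a m * (1 / 2) ^ m / 4)
    (m : ℕ) (u : ℕ → ℝ) (hu0 : ∀ k, 0 ≤ u k) (hu1 : ∀ k, u k ≤ 1) (P : ℕ → Prop)
    (H1 : ∀ n ≤ m, (∀ k < n, P k) → ¬ P n → u n ≤ (1 / 2) ^ (n + 1))
    (H2 : ∀ n k, n ≤ k → k ≤ m → (∀ j < n, P j) → u k ≤ (1 / 2) ^ n)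
    (hbig : ∑ k ∈ Finset.range (m + 1), a k * (1 / 2) ^ k
      - (a m * (1 / 2) ^ m / 4 - ∑' k, a (k + (m + 1))) < ∑' k, a k * u k) :
    ∀ n ≤ m, P n := by
  intro n
  induction n using Nat.strong_induction_on with
  | _ n ih =>
    intro hn
    by_contra hP
    have hPk : ∀ k < n, P k := fun k hk => ih k hk (by omega)
    have hsu : Summable (fun k => a k * u k) :=
      Summable.of_nonneg_of_le (fun k => mul_nonneg (ha k).le (hu0 k))
        (fun k => mul_le_of_le_one_right (ha k).le (hu1 k)) hs
    have hsplit := hsu.sum_add_tsum_nat_add (m + 1)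
    have htl : ∑' k, a (k + (m + 1)) * u (k + (m + 1)) ≤ ∑' k, a (k + (m + 1)) :=
      Summable.tsum_le_tsum (fun k => mul_le_of_le_one_right (ha _).le (hu1 _))
        ((summable_nat_add_iff (f := fun k => a k * u k) (m + 1)).2 hsu)
        ((summable_nat_add_iff (m + 1)).2 hs)
    have hn1 : n ≤ m + 1 := by omega
    have hcut : ∀ v : ℕ → ℝ, ∑ k ∈ Finset.range (m + 1), v k = ∑ k ∈ Finset.range n, v k +
        (v n + ∑ k ∈ Finset.Ico (n + 1) (m + 1), v k) := by
      intro v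
      rw [← Finset.sum_range_add_sum_Ico _ hn1,
        Finset.sum_eq_sum_Ico_succ_bot (Nat.lt_succ_of_le hn)]
    rw [hcut, ← hsplit, hcut (fun k => a k * u k)] at hbig
    have h1 : ∑ k ∈ Finset.range n, a k * u k ≤ ∑ k ∈ Finset.range n, a k * (1 / 2) ^ k := by
      apply Finset.sum_le_sum
      intro k hk
      have hk' := Finset.mem_range.1 hk
      exact mul_le_mul_of_nonneg_left (H2 k k le_rfl (by omega) (fun j hj => hPk j (by omega)))
        (ha k).le
    have h2 : a n * u n ≤ a n * (1 / 2) ^ n / 2 := by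
      have := mul_le_mul_of_nonneg_left (H1 n hn hPk hP) (ha n).le
      rw [pow_succ] at this; linarith
    have h3 : ∑ k ∈ Finset.Ico (n + 1) (m + 1), a k * u k ≤
        (∑ k ∈ Finset.Ico (n + 1) (m + 1), a k) * (1 / 2) ^ n := by
      rw [Finset.sum_mul]
      apply Finset.sum_le_sum
      intro k hk
      have hk' := Finset.mem_Ico.1 hk
      exact mul_le_mul_of_nonneg_left (H2 n k (by omega) (by omega) hPk) (ha k).le
    have h4 : ∑ k ∈ Finset.Ico (n + 1) (m + 1), a k ≤ a n / 4 := by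
      rw [Finset.sum_Ico_eq_sum_range]
      have : ∑ k ∈ Finset.range (m + 1 - (n + 1)), a (n + 1 + k) ≤ ∑' k, a (k + (n + 1)) := by
        simp_rw [add_comm (n + 1)]
        exact Summable.sum_le_tsum _ (fun k _ => (ha _).le) ((summable_nat_add_iff (n + 1)).2 hs)
      have h5 := ht n
      have h6 : a n * (1 / 2) ^ n ≤ a n :=
        mul_le_of_le_one_right (ha n).le (pow_le_one₀ (by norm_num) (by norm_num))
      linarith
    have h5 : 0 ≤ ∑ k ∈ Finset.Ico (n + 1) (m + 1), a k * (1 / 2) ^ k :=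
      Finset.sum_nonneg (fun k _ => mul_nonneg (ha k).le (by positivity))
    have h6 : a m * (1 / 2) ^ m ≤ a n * (1 / 2) ^ n :=
      mul_le_mul (hanti hn) (pow_le_pow_of_le_one (by norm_num) (by norm_num) hn)
        (by positivity) (ha n).le
    have h7 : (0:ℝ) < (1 / 2) ^ n := by positivity
    have h8 := mul_le_mul_of_nonneg_right h4 h7.le
    linarith

/-- A test function with prescribed decreasing heights near given points. -/
lemma test_fun {X : Type*} [TopologicalSpace X] [LocallyCompactSpace X] [T2Space X]
    (p : ℕ → X) (V : ℕ → Set X) (hV : ∀ i, V i ∈ 𝓝 (p i)) (m : ℕ) :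
    ∃ f : C₀(X, ℝ), (∀ s, 0 ≤ f s) ∧ (∀ i ≤ m, (1 / 2) ^ i ≤ f (p i)) ∧
      ∀ s j, (∀ k < j, k ≤ m → s ∉ V k) → f s ≤ (1 / 2) ^ j := by
  induction m with
  | zero =>
    obtain ⟨b, hb1, hb0, hb⟩ := c0_bump (p 0) (V 0) (hV 0)
    refine ⟨b, fun s => (hb s).1, fun i hi => ?_, fun s j hj => ?_⟩
    · obtain rfl : i = 0 := by omega
      simp [hb1]
    · rcases Nat.eq_zero_or_pos j with rfl | hj0
      · simpa using (hb s).2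
      · rw [hb0 s (hj 0 hj0 le_rfl)]; positivity
  | succ m ih =>
    obtain ⟨f, hf0, hf1, hf2⟩ := ih
    obtain ⟨b, hb1, hb0, hb⟩ := c0_bump (p (m + 1)) (V (m + 1)) (hV _)
    refine ⟨c0sup f (((1:ℝ) / 2) ^ (m + 1) • b), fun s => ?_, fun i hi => ?_, fun s j hj => ?_⟩
    · exact (hf0 s).trans (le_max_left _ _)
    · rcases Nat.lt_or_ge m i with h | h
      · obtain rfl : i = m + 1 := by omega
        refine le_trans ?_ (le_max_right _ _)
        simp [hb1]
      · exact (hf1 i h).trans (le_max_left _ _)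
    · refine max_le (hf2 s j (fun k hk hkm => hj k hk (by omega))) ?_
      rcases Nat.lt_or_ge (m + 1) j with h | h
      · simp only [ZeroAtInftyContinuousMap.smul_apply, hb0 s (hj (m + 1) h le_rfl), smul_zero]
        positivity
      · calc (((1:ℝ) / 2) ^ (m + 1) • b) s = (1 / 2) ^ (m + 1) * b s := rfl
          _ ≤ (1 / 2) ^ (m + 1) := mul_le_of_le_one_right (by positivity) (hb s).2
          _ ≤ (1 / 2) ^ j := pow_le_pow_of_le_one (by norm_num) (by norm_num) h

lemma local_equi {X : Type*} [MetricSpace X] [LocallyCompactSpace X] (G : Set (X ≃ₜ X))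
    (h_equi : ∀ K : Set X, IsCompact K → ∀ ε > 0, ∃ δ > 0,
      ∀ x ∈ K, ∀ y ∈ K, dist x y < δ → ∀ φ ∈ G, dist (φ x) (φ y) < ε) (p : X) (ε : ℝ)
    (hε : 0 < ε) : ∃ V ∈ 𝓝 p, ∀ u ∈ V, ∀ v ∈ V, ∀ φ ∈ G, dist (φ u) (φ v) < ε := by
  obtain ⟨K, hK, hKp⟩ := exists_compact_mem_nhds p
  obtain ⟨δ, hδ, h⟩ := h_equi K hK ε hε
  refine ⟨K ∩ Metric.ball p (δ / 2), inter_mem hKp (Metric.ball_mem_nhds p (by positivity)), ?_⟩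
  intro u hu v hv φ hφ
  refine h u hu.1 v hv.1 ?_ φ hφ
  have h1 := Metric.mem_ball.1 hu.2
  have h2 := Metric.mem_ball'.1 hv.2
  linarith [dist_triangle u p v]

/-- The renorming. -/
def gnorm {X : Type*} [TopologicalSpace X] (G : Set (X ≃ₜ X)) (a : ℕ → ℝ) (t : ℕ → X)
    (x : C₀(X, ℝ)) : ℝ :=
  max ‖x‖ (⨆ g : G, ∑' k, a k * |x (g.1 (t k))|)

section
variable {X : Type*} [TopologicalSpace X] (G : Set (X ≃ₜ X)) (a : ℕ → ℝ) (t : ℕ → X)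

lemma gsummable (ha : ∀ k, 0 < a k) (hs : Summable a) (x : C₀(X, ℝ)) (g : X ≃ₜ X) :
    Summable (fun k => a k * |x (g (t k))|) :=
  Summable.of_nonneg_of_le (fun k => mul_nonneg (ha k).le (abs_nonneg _))
    (fun k => mul_le_mul_of_nonneg_left (c0_abs_le x _) (ha k).le) (hs.mul_right ‖x‖)

lemma gsum_le (ha : ∀ k, 0 < a k) (hs : Summable a) (x : C₀(X, ℝ)) (g : X ≃ₜ X) :
    ∑' k, a k * |x (g (t k))| ≤ (∑' k, a k) * ‖x‖ := by
  rw [← tsum_mul_right]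
  exact Summable.tsum_le_tsum (fun k => mul_le_mul_of_nonneg_left (c0_abs_le x _) (ha k).le)
    (gsummable a t ha hs x g) (hs.mul_right _)

lemma gbdd (ha : ∀ k, 0 < a k) (hs : Summable a) (x : C₀(X, ℝ)) :
    BddAbove (Set.range (fun g : G => ∑' k, a k * |x (g.1 (t k))|)) :=
  ⟨(∑' k, a k) * ‖x‖, by rintro _ ⟨g, rfl⟩; exact gsum_le a t ha hs x g.1⟩

lemma gle (ha : ∀ k, 0 < a k) (hs : Summable a) (x : C₀(X, ℝ)) (g : X ≃ₜ X) (hg : g ∈ G) :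
    ∑' k, a k * |x (g (t k))| ≤ gnorm G a t x :=
  (le_ciSup (gbdd G a t ha hs x) ⟨g, hg⟩).trans (le_max_right _ _)

lemma gnorm_le (h_id : Homeomorph.refl X ∈ G) (x : C₀(X, ℝ)) (M : ℝ) (h1 : ‖x‖ ≤ M)
    (h2 : ∀ g ∈ G, ∑' k, a k * |x (g (t k))| ≤ M) : gnorm G a t x ≤ M := by
  have : Nonempty G := ⟨⟨_, h_id⟩⟩
  exact max_le h1 (ciSup_le (fun g => h2 g.1 g.2))

lemma gnorm_add (h_id : Homeomorph.refl X ∈ G) (ha : ∀ k, 0 < a k) (hs : Summable a)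
    (x y : C₀(X, ℝ)) : gnorm G a t (x + y) ≤ gnorm G a t x + gnorm G a t y := by
  apply gnorm_le G a t h_id
  · exact (norm_add_le x y).trans (add_le_add (le_max_left _ _) (le_max_left _ _))
  · intro g hg
    refine le_trans ?_ (add_le_add (gle G a t ha hs x g hg) (gle G a t ha hs y g hg))
    have sx := gsummable a t ha hs x g
    have sy := gsummable a t ha hs y g
    rw [← sx.tsum_add sy]
    refine Summable.tsum_le_tsum (fun k => ?_) (gsummable a t ha hs _ g) (sx.add sy)
    rw [← mul_add]
    exact mul_le_mul_of_nonneg_left (abs_add_le _ _) (ha k).le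

lemma gnorm_smul (c : ℝ)
    (x : C₀(X, ℝ)) : gnorm G a t (c • x) = |c| * gnorm G a t x := by
  unfold gnorm
  rw [mul_max_of_nonneg _ _ (abs_nonneg c), norm_smul, Real.norm_eq_abs,
    Real.mul_iSup_of_nonneg (abs_nonneg c)]
  congr 2
  ext g
  rw [← tsum_mul_left]
  congr 1
  ext k
  simp only [ZeroAtInftyContinuousMap.smul_apply, smul_eq_mul, abs_mul]
  ring

lemma gnorm_mono (h_id : Homeomorph.refl X ∈ G) (ha : ∀ k, 0 < a k) (hs : Summable a)
    (x y : C₀(X, ℝ)) (h : ∀ t, |x t| ≤ |y t|) : gnorm G a t x ≤ gnorm G a t y := by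
  apply gnorm_le G a t h_id
  · exact (c0_norm_le x (norm_nonneg y) (fun t => (h t).trans (c0_abs_le y t))).trans
      (le_max_left _ _)
  · intro g hg
    refine le_trans ?_ (gle G a t ha hs y g hg)
    exact Summable.tsum_le_tsum (fun k => mul_le_mul_of_nonneg_left (h _) (ha k).le)
      (gsummable a t ha hs x g) (gsummable a t ha hs y g)

lemma compOp_norm_le (φ : X ≃ₜ X) (x : C₀(X, ℝ)) : ‖compOp φ x‖ ≤ ‖x‖ :=
  c0_norm_le _ (norm_nonneg x) (fun t => c0_abs_le x (φ t))

lemma compOp_symm (φ : X ≃ₜ X) (x : C₀(X, ℝ)) : compOp φ.symm (compOp φ x) = x := by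
  ext t; simp

lemma compOp_norm (φ : X ≃ₜ X) (x : C₀(X, ℝ)) : ‖compOp φ x‖ = ‖x‖ := by
  refine le_antisymm (compOp_norm_le φ x) ?_
  have := compOp_norm_le φ.symm (compOp φ x)
  rwa [compOp_symm] at this

lemma gnorm_comp_le (h_id : Homeomorph.refl X ∈ G)
    (h_comp : ∀ φ ∈ G, ∀ ψ ∈ G, φ.trans ψ ∈ G) (ha : ∀ k, 0 < a k) (hs : Summable a)
    (φ : X ≃ₜ X) (hφ : φ ∈ G) (x : C₀(X, ℝ)) : gnorm G a t (compOp φ x) ≤ gnorm G a t x := by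
  apply gnorm_le G a t h_id
  · exact (compOp_norm_le φ x).trans (le_max_left _ _)
  · intro g hg
    exact gle G a t ha hs x (g.trans φ) (h_comp g hg φ hφ)

lemma gnorm_comp (h_id : Homeomorph.refl X ∈ G)
    (h_comp : ∀ φ ∈ G, ∀ ψ ∈ G, φ.trans ψ ∈ G) (h_inv : ∀ φ ∈ G, φ.symm ∈ G)
    (ha : ∀ k, 0 < a k) (hs : Summable a)
    (φ : X ≃ₜ X) (hφ : φ ∈ G) (x : C₀(X, ℝ)) : gnorm G a t (compOp φ x) = gnorm G a t x := by
  refine le_antisymm (gnorm_comp_le G a t h_id h_comp ha hs φ hφ x) ?_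
  have := gnorm_comp_le G a t h_id h_comp ha hs φ.symm (h_inv φ hφ) (compOp φ x)
  rwa [compOp_symm] at this

/-- Away from the closure of the orbit of `t 0` the weight of an isometry is at most one. -/
lemma weight_le [LocallyCompactSpace X] [T2Space X] (h_id : Homeomorph.refl X ∈ G)
    (ha : ∀ k, 0 < a k) (ha0 : a 0 = 1) (hs : Summable a)
    (ht : ∀ m, ∑' k, a (k + (m + 1)) < a m * (1 / 2) ^ m / 4)
    (T : C₀(X, ℝ) → C₀(X, ℝ)) (w : ℝ) (s p : X) (h : ∀ f, T f s = w * f p)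
    (hT : ∀ x, gnorm G a t (T x) = gnorm G a t x)
    (hp : p ∉ closure {z : X | ∃ φ ∈ G, φ (t 0) = z}) : w ≤ 1 := by
  obtain ⟨b, hb1, hb0, hb⟩ := c0_bump p (closure {z : X | ∃ φ ∈ G, φ (t 0) = z})ᶜ
    (isClosed_closure.isOpen_compl.mem_nhds hp)
  have h1 : gnorm G a t b ≤ 1 := by
    apply gnorm_le G a t h_id
    · exact c0_norm_le _ zero_le_one (fun s => by rw [abs_of_nonneg (hb s).1]; exact (hb s).2)
    · intro g hg
      have hsu := gsummable a t ha hs b g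
      have h0 := hsu.sum_add_tsum_nat_add 1
      rw [← h0]
      have h2 : b (g (t 0)) = 0 := hb0 _ (fun hn => hn (subset_closure ⟨g, hg, rfl⟩))
      have h3 : ∑' k, a (k + 1) * |b (g (t (k + 1)))| ≤ ∑' k, a (k + 1) := by
        refine Summable.tsum_le_tsum (fun k => mul_le_of_le_one_right (ha _).le ?_)
          ((summable_nat_add_iff (f := fun k => a k * |b (g (t k))|) 1).2 hsu)
          ((summable_nat_add_iff 1).2 hs)
        rw [abs_of_nonneg (hb _).1]; exact (hb _).2
      have h4 := ht 0
      simp [ha0] at h4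
      simp [h2]
      linarith
  have h2 : T b s = w := by rw [h, hb1, mul_one]
  calc w ≤ |T b s| := by rw [h2]; exact le_abs_self w
    _ ≤ ‖T b‖ := c0_abs_le _ _
    _ ≤ gnorm G a t (T b) := le_max_left _ _
    _ ≤ 1 := by rw [hT]; exact h1

end

lemma approx {X : Type*} [MetricSpace X] [LocallyCompactSpace X] (G : Set (X ≃ₜ X))
    (h_id : Homeomorph.refl X ∈ G) (h_inv : ∀ φ ∈ G, φ.symm ∈ G)
    (h_equi : ∀ K : Set X, IsCompact K → ∀ ε > 0, ∃ δ > 0,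
      ∀ x ∈ K, ∀ y ∈ K, dist x y < δ → ∀ φ ∈ G, dist (φ x) (φ y) < ε)
    (a : ℕ → ℝ) (ha : ∀ k, 0 < a k) (ha0 : a 0 = 1) (hanti : Antitone a) (hs : Summable a)
    (ht : ∀ m, ∑' k, a (k + (m + 1)) < a m * (1 / 2) ^ m / 4)
    (t : ℕ → X) (hinj : Function.Injective t) (ψ : X ≃ₜ X)
    (hψ : ∀ x, gnorm G a t (compOp ψ x) = gnorm G a t x) (m : ℕ) (ε : ℝ) (hε : 0 < ε) :
    ∃ g ∈ G, ∀ i ≤ m, dist (g (t i)) (ψ (t i)) < ε := by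
  -- separation constant
  obtain ⟨M, hM⟩ : ∃ M, M = m + 1 := ⟨_, rfl⟩
  obtain ⟨ρ, hsep, hρ⟩ : ∃ ρ : ℝ, (∀ i ∈ Set.Iic M, ∀ j ∈ Set.Iic M, i ≠ j →
      ρ ≤ dist (t i) (t j)) ∧ ρ ∈ Set.Ioi (0:ℝ) := by
    refine (Filter.Eventually.and (f := 𝓝[>] (0:ℝ)) ?_ self_mem_nhdsWithin).exists
    rw [Filter.eventually_all_finite (Set.finite_Iic M)]
    intro i _
    rw [Filter.eventually_all_finite (Set.finite_Iic M)]
    intro j _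
    by_cases hij : i = j
    · simp [hij]
    · have : 0 < dist (t i) (t j) := dist_pos.2 (fun h => hij (hinj h))
      filter_upwards [mem_nhdsWithin_of_mem_nhds (Iio_mem_nhds this)] with ρ hρ _
      exact le_of_lt hρ
  choose W hW hWG using fun i => local_equi G h_equi (ψ (t i)) ρ hρ
  obtain ⟨f, hf0, hf1, hf2⟩ := test_fun (fun i => ψ (t i))
    (fun i => W i ∩ Metric.ball (ψ (t i)) ε)
    (fun i => inter_mem (hW i) (Metric.ball_mem_nhds _ hε)) M
  have hfle : ∀ s, f s ≤ 1 := fun s => by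
    simpa using hf2 s 0 (fun k hk => absurd hk (Nat.not_lt_zero k))
  set R : ℝ := ∑ k ∈ Finset.range (M + 1), a k * (1 / 2) ^ k with hR
  set σ : ℝ := a M * (1 / 2) ^ M / 4 - ∑' k, a (k + (M + 1)) with hσ
  have hσ0 : 0 < σ := sub_pos.2 (ht M)
  have hR1 : 1 < R - σ := by
    have h1 : 1 + a M * (1 / 2) ^ M ≤ R := by
      rw [hR, Finset.sum_range_succ, hM, Finset.sum_range_succ']
      have : 0 ≤ ∑ k ∈ Finset.range m, a (k + 1) * (1 / 2) ^ (k + 1) :=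
        Finset.sum_nonneg (fun k _ => mul_nonneg (ha _).le (by positivity))
      simp only [ha0, pow_zero]
      linarith
    have h2 : 0 ≤ ∑' k, a (k + (M + 1)) := tsum_nonneg (fun k => (ha _).le)
    have h3 : 0 < a M * (1 / 2) ^ M := mul_pos (ha M) (by positivity)
    linarith
  have hRN : R ≤ gnorm G a t f := by
    rw [← hψ f]
    refine le_trans ?_ (gle G a t ha hs (compOp ψ f) _ h_id)
    refine le_trans ?_ (Summable.sum_le_tsum (Finset.range (M + 1))
      (fun k _ => mul_nonneg (ha k).le (abs_nonneg _)) (gsummable a t ha hs (compOp ψ f) _))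
    apply Finset.sum_le_sum
    intro k hk
    have hk' : k ≤ M := Nat.lt_succ_iff.1 (Finset.mem_range.1 hk)
    exact mul_le_mul_of_nonneg_left ((hf1 k hk').trans (le_abs_self _)) (ha k).le
  have hnf : ‖f‖ ≤ 1 := c0_norm_le _ zero_le_one (fun s => by
    rw [abs_of_nonneg (hf0 s)]; exact hfle s)
  obtain ⟨g, hg⟩ : ∃ g : G, R - σ < ∑' k, a k * |f (g.1 (t k))| := by
    have : Nonempty G := ⟨⟨_, h_id⟩⟩
    apply exists_lt_of_lt_ciSup
    have h1 : R - σ < gnorm G a t f := by linarith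
    rcases lt_max_iff.1 h1 with h2 | h2
    · linarith
    · exact h2
  simp_rw [abs_of_nonneg (hf0 _)] at hg
  -- two different points cannot fall into the same neighbourhood
  have hone : ∀ k ≤ M, ∀ n ≤ M, k ≠ n → g.1 (t k) ∈ W k → g.1 (t n) ∉ W k := by
    intro k hk n hn hkn h1 h2
    have := hWG k _ h1 _ h2 g.1.symm (h_inv _ g.2)
    simp only [Homeomorph.symm_apply_apply] at this
    exact absurd (hsep k hk n hn hkn) (not_le.2 this)
  have hlab := labels a ha hanti hs ht M (fun k => f (g.1 (t k))) (fun k => hf0 _)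
    (fun k => hfle _) (fun n => g.1 (t n) ∈ W n ∩ Metric.ball (ψ (t n)) ε)
    (fun n hn hP hPn => hf2 _ _ (fun k hk hkM hmem => by
      rcases Nat.lt_or_ge k n with h | h
      · exact hone k hkM n hn (by omega) (hP k h).1 hmem.1
      · obtain rfl : k = n := by omega
        exact hPn hmem))
    (fun n k hnk hkM hP => hf2 _ _ (fun j hj hjM hmem =>
      hone j hjM k hkM (by omega) (hP j hj).1 hmem.1))
    hg
  exact ⟨g.1, g.2, fun i hi => (hlab i (by omega)).2⟩

lemma unif_of_ptwise {X : Type*} [MetricSpace X] [LocallyCompactSpace X] (G : Set (X ≃ₜ X))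
    (h_equi : ∀ K : Set X, IsCompact K → ∀ ε > 0, ∃ δ > 0,
      ∀ x ∈ K, ∀ y ∈ K, dist x y < δ → ∀ φ ∈ G, dist (φ x) (φ y) < ε)
    (g : ℕ → X ≃ₜ X) (hg : ∀ n, g n ∈ G) (ψ : X → X) (hψ : Continuous ψ)
    (h : ∀ p, Tendsto (fun n => g n p) atTop (𝓝 (ψ p))) (K : Set X) (hK : IsCompact K)
    (ε : ℝ) (hε : 0 < ε) : ∀ᶠ n in atTop, ∀ x ∈ K, dist (g n x) (ψ x) < ε := by
  have hloc : TendstoLocallyUniformlyOn (fun n x => g n x) ψ atTop K := by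
    rw [Metric.tendstoLocallyUniformlyOn_iff]
    intro η hη p _
    obtain ⟨V, hV, hVG⟩ := local_equi G h_equi p (η / 3) (by positivity)
    have hψV : ∀ᶠ y in 𝓝 p, dist (ψ y) (ψ p) < η / 3 :=
      Metric.tendsto_nhds.1 hψ.continuousAt _ (by positivity)
    refine ⟨V ∩ {y | dist (ψ y) (ψ p) < η / 3}, mem_nhdsWithin_of_mem_nhds (inter_mem hV hψV), ?_⟩
    filter_upwards [Metric.tendsto_nhds.1 (h p) (η / 3) (by positivity)] with n hn y hy
    have h1 := hVG y hy.1 p (mem_of_mem_nhds hV) (g n) (hg n)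
    have h2 : dist (ψ y) (ψ p) < η / 3 := hy.2
    rw [dist_comm] at hn h1
    linarith [dist_triangle4 (ψ y) (ψ p) (g n p) (g n y)]
  have := (tendstoLocallyUniformlyOn_iff_tendstoUniformlyOn_of_compact hK).1 hloc
  filter_upwards [Metric.tendstoUniformlyOn_iff.1 this ε hε] with n hn x hx
  rw [dist_comm]; exact hn x hx

lemma sot_conv {X : Type*} [MetricSpace X] [LocallyCompactSpace X] (G : Set (X ≃ₜ X))
    (h_inv : ∀ φ ∈ G, φ.symm ∈ G)
    (h_equi : ∀ K : Set X, IsCompact K → ∀ ε > 0, ∃ δ > 0,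
      ∀ x ∈ K, ∀ y ∈ K, dist x y < δ → ∀ φ ∈ G, dist (φ x) (φ y) < ε)
    (t : ℕ → X) (hd : DenseRange t)
    (g : ℕ → X ≃ₜ X) (hg : ∀ n, g n ∈ G) (ψ : X ≃ₜ X)
    (h : ∀ i, Tendsto (fun n => g n (t i)) atTop (𝓝 (ψ (t i)))) (f : C₀(X, ℝ)) :
    Tendsto (fun n => ‖compOp (g n) f - compOp ψ f‖) atTop (𝓝 0) := by
  have hpt : ∀ p, Tendsto (fun n => g n p) atTop (𝓝 (ψ p)) := by
    intro p
    rw [Metric.tendsto_nhds]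
    intro η hη
    obtain ⟨V, hV, hVG⟩ := local_equi G h_equi p (η / 3) (by positivity)
    have hψV : ∀ᶠ y in 𝓝 p, dist (ψ y) (ψ p) < η / 3 :=
      Metric.tendsto_nhds.1 ψ.continuous.continuousAt _ (by positivity)
    obtain ⟨i, hi⟩ := hd.exists_mem_open isOpen_interior
      ⟨p, mem_interior_iff_mem_nhds.2 (inter_mem hV hψV)⟩
    have hi' := interior_subset hi
    filter_upwards [Metric.tendsto_nhds.1 (h i) (η / 3) (by positivity)] with n hn
    have h1 := hVG p (mem_of_mem_nhds hV) (t i) hi'.1 (g n) (hg n)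
    have h2 : dist (ψ (t i)) (ψ p) < η / 3 := hi'.2
    linarith [dist_triangle4 (g n p) (g n (t i)) (ψ (t i)) (ψ p)]
  have hpt' : ∀ p, Tendsto (fun n => (g n).symm p) atTop (𝓝 (ψ.symm p)) := by
    intro p
    rw [Metric.tendsto_nhds]
    intro η hη
    obtain ⟨V, hV, hVG⟩ := local_equi G h_equi p η hη
    have h1 := hpt (ψ.symm p)
    rw [ψ.apply_symm_apply] at h1
    filter_upwards [h1.eventually hV] with n hn
    have := hVG p (mem_of_mem_nhds hV) _ hn (g n).symm (h_inv _ (hg n))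
    simpa using this
  rw [Metric.tendsto_nhds]
  intro η hη
  have hev : ∀ᶠ s in cocompact X, |f s| < η / 4 := by
    have := (zero_at_infty f).eventually (Metric.ball_mem_nhds (0:ℝ) (show 0 < η / 4 by positivity))
    simpa using this
  obtain ⟨K, hK, hKs⟩ := mem_cocompact.1 hev
  obtain ⟨δ₁, hδ₁, hu₁⟩ := Metric.uniformContinuous_iff.1
    (ZeroAtInftyContinuousMap.uniformContinuous f) (η / 2) (by positivity)
  obtain ⟨δ₂, hδ₂, hu₂⟩ := Metric.uniformContinuous_iff.1
    (ZeroAtInftyContinuousMap.uniformContinuous (compOp ψ f)) (η / 2) (by positivity)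
  have e1 := unif_of_ptwise G h_equi g hg ψ ψ.continuous hpt (ψ ⁻¹' K)
    (ψ.isCompact_preimage.2 hK) δ₁ hδ₁
  have e2 := unif_of_ptwise G h_equi (fun n => (g n).symm) (fun n => h_inv _ (hg n)) ψ.symm
    ψ.symm.continuous hpt' K hK δ₂ hδ₂
  filter_upwards [e1, e2] with n h1 h2
  rw [Real.dist_eq, sub_zero, abs_of_nonneg (norm_nonneg _)]
  refine lt_of_le_of_lt (c0_norm_le _ (show 0 ≤ η / 2 by positivity) fun s => ?_) (by linarith)
  show |f (g n s) - f (ψ s)| ≤ η / 2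
  by_cases hs1 : ψ s ∈ K
  · have := hu₁ (h1 s hs1)
    rw [Real.dist_eq] at this
    exact this.le
  by_cases hs2 : g n s ∈ K
  · have := hu₂ (h2 _ hs2)
    simp only [Homeomorph.symm_apply_apply, compOp_apply', Homeomorph.apply_symm_apply] at this
    rw [Real.dist_eq, abs_sub_comm] at this
    exact this.le
  · have a1 : |f (ψ s)| < η / 4 := hKs hs1
    have a2 : |f (g n s)| < η / 4 := hKs hs2
    linarith [abs_sub (f (g n s)) (f (ψ s))]

lemma exists_inj_dense (X : Type*) [MetricSpace X] [PolishSpace X] [Nonempty X]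
    (h : ∀ t : X, ¬ IsOpen ({t} : Set X)) :
    ∃ t : ℕ → X, Function.Injective t ∧ DenseRange t := by
  obtain ⟨S, hS, hSd⟩ := TopologicalSpace.exists_countable_dense X
  have hinf : S.Infinite := by
    intro hfin
    have h1 : S = Set.univ := by rw [← hfin.isClosed.closure_eq, hSd.closure_eq]
    have h2 : Finite X := Set.finite_univ_iff.1 (h1 ▸ hfin)
    obtain ⟨x⟩ := ‹Nonempty X›
    exact h x (isOpen_discrete _)
  have : Countable S := hS
  have : Infinite S := hinf.to_subtype
  obtain ⟨e⟩ := nonempty_denumerable S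
  refine ⟨fun n => ((Denumerable.eqv S).symm n : S),
    Subtype.val_injective.comp (Denumerable.eqv S).symm.injective, ?_⟩
  have : Set.range (fun n => (((Denumerable.eqv S).symm n : S) : X)) = S := by
    ext x
    constructor
    · rintro ⟨n, rfl⟩; exact Subtype.property _
    · intro hx; exact ⟨Denumerable.eqv S ⟨x, hx⟩, by simp⟩
  unfold DenseRange
  rw [this]; exact hSd

/-- **Theorem 1.2 (main theorem).** Let `X` be a locally compact Polish space and `G` a
group of homeomorphisms of `X`, equicontinuous on compact sets, with nowhere dense orbits,
and relatively SOT-closed (any SOT limit of composition operators from `G` which is a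
surjective lattice isometry of `(C₀(X), ‖·‖_∞)` is again a composition operator from `G`).
Then for every `C > 1` there is an equivalent lattice norm `N` on `C₀(X)`, with
`‖·‖ ≤ N ≤ C‖·‖`, invariant under `G`, whose lattice isometries are exactly the
composition operators coming from `G`. -/
theorem stmt7 {X : Type*} [MetricSpace X] [PolishSpace X] [LocallyCompactSpace X]
    (G : Set (X ≃ₜ X)) (h_id : Homeomorph.refl X ∈ G)
    (h_comp : ∀ φ ∈ G, ∀ ψ ∈ G, φ.trans ψ ∈ G) (h_inv : ∀ φ ∈ G, φ.symm ∈ G)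
    (h_equi : ∀ K : Set X, IsCompact K → ∀ ε > 0, ∃ δ > 0,
      ∀ x ∈ K, ∀ y ∈ K, dist x y < δ → ∀ φ ∈ G, dist (φ x) (φ y) < ε)
    (h_nd : ∀ t : X, IsNowhereDense {z : X | ∃ φ ∈ G, φ t = z})
    (h_closed : ∀ φn : ℕ → X ≃ₜ X, (∀ n, φn n ∈ G) →
      ∀ T : C₀(X, ℝ) ≃ₗᵢ[ℝ] C₀(X, ℝ),
        (∀ f g : C₀(X, ℝ), T (c0sup f g) = c0sup (T f) (T g)) →
        (∀ f : C₀(X, ℝ), Tendsto (fun n => ‖compOp (φn n) f - T f‖) atTop (𝓝 0)) →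
        ∃ φ ∈ G, ∀ f : C₀(X, ℝ), T f = compOp φ f) :
    ∀ C : ℝ, 1 < C → ∃ N : C₀(X, ℝ) → ℝ,
      (∀ x y : C₀(X, ℝ), N (x + y) ≤ N x + N y) ∧
      (∀ (c : ℝ) (x : C₀(X, ℝ)), N (c • x) = |c| * N x) ∧
      (∀ x y : C₀(X, ℝ), (∀ t, |x t| ≤ |y t|) → N x ≤ N y) ∧
      (∀ x : C₀(X, ℝ), ‖x‖ ≤ N x ∧ N x ≤ C * ‖x‖) ∧
      (∀ φ ∈ G, ∀ x : C₀(X, ℝ), N (compOp φ x) = N x) ∧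
      (∀ T : C₀(X, ℝ) ≃L[ℝ] C₀(X, ℝ),
        (∀ f g : C₀(X, ℝ), T (c0sup f g) = c0sup (T f) (T g)) →
        (∀ x : C₀(X, ℝ), N (T x) = N x) →
        ∃ φ ∈ G, ∀ f : C₀(X, ℝ), T f = compOp φ f) := by
  intro C hC
  obtain ⟨a, ha0, ha, hanti, hs, hsC, ht⟩ := exists_weights C hC
  rcases isEmpty_or_nonempty X with hX | hX
  · have hz : ∀ f g : C₀(X, ℝ), f = g := fun f g => ZeroAtInftyContinuousMap.eq_of_empty f g
    refine ⟨fun x => ‖x‖, norm_add_le, fun c x => norm_smul c x, fun x y _ => by rw [hz x y],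
      fun x => ⟨le_rfl, ?_⟩, fun φ _ x => by rw [hz (compOp φ x) x],
      fun T _ _ => ⟨_, h_id, fun f => hz _ _⟩⟩
    rw [hz x 0]; simp
  have hiso : ∀ t : X, ¬ IsOpen ({t} : Set X) := by
    intro t ho
    have h1 : ({t} : Set X) ⊆ interior (closure {z : X | ∃ φ ∈ G, φ t = z}) :=
      interior_maximal (Set.singleton_subset_iff.2 (subset_closure ⟨_, h_id, rfl⟩)) ho
    have h2 : interior (closure {z : X | ∃ φ ∈ G, φ t = z}) = ∅ := h_nd t
    rw [h2] at h1
    exact h1 rfl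
  obtain ⟨t, hinj, hd⟩ := exists_inj_dense X hiso
  refine ⟨gnorm G a t, gnorm_add G a t h_id ha hs, gnorm_smul G a t,
    gnorm_mono G a t h_id ha hs, fun x => ⟨le_max_left _ _, ?_⟩,
    gnorm_comp G a t h_id h_comp h_inv ha hs, ?_⟩
  · apply gnorm_le G a t h_id
    · exact le_mul_of_one_le_left (norm_nonneg x) hC.le
    · intro g _
      exact (gsum_le a t ha hs x g).trans (mul_le_mul_of_nonneg_right hsC (norm_nonneg x))
  · intro T hT hN
    obtain ⟨ψ, w, w', hw, hw', hψ, hψ', hww⟩ := lattice_rep T hT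
    have hN' : ∀ x, gnorm G a t (T.symm x) = gnorm G a t x := fun x => by
      rw [← hN (T.symm x), T.apply_symm_apply]
    set Z : Set X := closure {z : X | ∃ φ ∈ G, φ (t 0) = z} with hZ
    have hZd : Dense Zᶜ := interior_eq_empty_iff_dense_compl.1 (h_nd (t 0))
    have hZo : IsOpen Zᶜ := isClosed_closure.isOpen_compl
    have hdense : Dense (Zᶜ ∩ ψ ⁻¹' Zᶜ) :=
      hZd.inter_of_isOpen_left (hZd.preimage ψ.isOpenMap) hZo
    have hone : ∀ s ∈ Zᶜ ∩ ψ ⁻¹' Zᶜ, w s = 1 := by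
      intro s hs'
      have h1 : w s ≤ 1 := weight_le G a t h_id ha ha0 hs ht T (w s) s (ψ s) (hψ s) hN hs'.2
      have h2 : w' (ψ s) ≤ 1 := weight_le G a t h_id ha ha0 hs ht T.symm (w' (ψ s)) (ψ s) s
        (fun f => by rw [hψ', ψ.symm_apply_apply]) hN' hs'.1
      have h3 := hww s
      have h4 := hw s
      nlinarith
    have hTc : ∀ f, T f = compOp ψ f := by
      intro f
      apply DFunLike.coe_injective
      refine Continuous.ext_on hdense (map_continuous (T f)) (map_continuous (compOp ψ f)) ?_
      intro s hs'
      rw [hψ, hone s hs', one_mul]; rfl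
    have happ := fun m : ℕ => approx G h_id h_inv h_equi a ha ha0 hanti hs ht t hinj ψ
      (fun x => by rw [← hTc, hN]) m (1 / ((m : ℝ) + 1)) (by positivity)
    choose g hgG hg using happ
    have hconv : ∀ i, Tendsto (fun n => g n (t i)) atTop (𝓝 (ψ (t i))) := by
      intro i
      rw [tendsto_iff_dist_tendsto_zero]
      refine squeeze_zero' (Eventually.of_forall fun _ => dist_nonneg) ?_
        tendsto_one_div_add_atTop_nhds_zero_nat
      filter_upwards [eventually_ge_atTop i] with n hn
      exact (hg n i hn).le
    let T' : C₀(X, ℝ) ≃ₗᵢ[ℝ] C₀(X, ℝ) :=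
      ⟨T.toLinearEquiv, fun f => (congrArg norm (hTc f)).trans (compOp_norm ψ f)⟩
    have hT' : ∀ f, T' f = T f := fun _ => rfl
    obtain ⟨φ, hφ, h⟩ := h_closed g hgG T' (fun f f' => hT f f') (fun f => by
      rw [hT', hTc]
      exact sot_conv G h_inv h_equi t hd g hgG ψ hconv f)
    exact ⟨φ, hφ, fun f => h f⟩

end
end

section
/- Let X be a locally compact Polish space and let G be a group of homeomorphisms of X such that: (i) the set of composition operators {C_φ : φ ∈ G} is compact in the strong operator topology on bounded operators on C₀(X); and (ii) for every t ∈ X the orbit {φ(t) : φ ∈ G} is nowhere dense in X. Then for every C > 1 there exists a norm N on C₀(X) such that: N is a lattice norm (|x| ≤ |y| implies N(x) ≤ N(y)); ‖x‖_∞ ≤ N(x) ≤ C‖x‖_∞ for all x ∈ C₀(X); every composition operator C_φ with φ ∈ G satisfies N(C_φ x) = N(x) for all x; and conversely every lattice isomorphism T of C₀(X) satisfying N(T x) = N(x) for all x equals C_φ for some φ ∈ G. -/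
open ZeroAtInfty Filter Topology Metric

noncomputable section

namespace Stmt12

variable {X : Type*} [TopologicalSpace X]

lemma abs_le_norm (f : C₀(X, ℝ)) (t : X) : |f t| ≤ ‖f‖ :=
  f.toBCF.norm_coe_le_norm t

lemma norm_le_of (f : C₀(X, ℝ)) {c : ℝ} (hc : 0 ≤ c) (h : ∀ t, |f t| ≤ c) : ‖f‖ ≤ c :=
  (f.toBCF.norm_le hc).2 h

lemma c0sup_apply (f g : C₀(X, ℝ)) (t : X) : c0sup f g t = max (f t) (g t) := rfl

lemma compOp_apply (φ : X ≃ₜ X) (f : C₀(X, ℝ)) (t : X) : compOp φ f t = f (φ t) := rfl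

/-- compactly supported functions as elements of `C₀` -/
def ofCS (f : C(X, ℝ)) (h : HasCompactSupport f) : C₀(X, ℝ) where
  toFun := f
  continuous_toFun := f.continuous
  zero_at_infty' := h.is_zero_at_infty

/-- soft truncation -/
def trunc (f : C₀(X, ℝ)) (ε : ℝ) (hε : 0 ≤ ε) : C₀(X, ℝ) where
  toFun := fun t => max (f t - ε) 0
  continuous_toFun := ((map_continuous f).sub continuous_const).max continuous_const
  zero_at_infty' := by
    have h : Tendsto (fun u : ℝ => max (u - ε) 0) (𝓝 0) (𝓝 (max (0 - ε) 0)) :=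
      ((continuous_id.sub continuous_const).max continuous_const).tendsto 0
    rw [max_eq_right (by linarith)] at h
    exact h.comp (zero_at_infty f)

lemma exists_bump [T2Space X] [LocallyCompactSpace X] (s : X) (K : Set X) (hK : IsClosed K)
    (hs : s ∉ K) : ∃ f : C₀(X, ℝ), f s = 1 ∧ (∀ t ∈ K, f t = 0) ∧ ∀ t, 0 ≤ f t ∧ f t ≤ 1 := by
  obtain ⟨f, h1, h0, hc, hI⟩ := exists_continuous_one_zero_of_isCompact (isCompact_singleton (x := s))
    hK (Set.disjoint_singleton_left.2 hs)
  exact ⟨ofCS f hc, h1 rfl, fun t ht => h0 ht, fun t => hI t⟩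

/-- A nonzero lattice homomorphism functional is a positive multiple of a point evaluation. -/
lemma functional_rep [T2Space X] [LocallyCompactSpace X] (L : C₀(X, ℝ) →L[ℝ] ℝ)
    (hL : ∀ f g, L (c0sup f g) = max (L f) (L g)) (h0 : L ≠ 0) :
    ∃ s : X, ∃ w : ℝ, 0 < w ∧ ∀ f, L f = w * f s := by
  have mono : ∀ f g : C₀(X, ℝ), (∀ t, f t ≤ g t) → L f ≤ L g := by
    intro f g h
    have : c0sup f g = g := by ext t; rw [c0sup_apply]; exact max_eq_right (h t)
    rw [← this, hL]; exact le_max_left _ _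
  have habs : ∀ f, L (c0sup f (-f)) = |L f| := by
    intro f; rw [hL, map_neg]; rfl
  have key : ∃ s : X, ∀ f, L f = 0 → f s = 0 := by
    by_contra! hcon
    have hcon' : ∀ s : X, ∃ f : C₀(X, ℝ), L f = 0 ∧ 0 < f s ∧ ∀ t, 0 ≤ f t := by
      intro s
      obtain ⟨f, hf, hfs⟩ := hcon s
      refine ⟨c0sup f (-f), by rw [habs, hf, abs_zero], ?_, ?_⟩
      · exact abs_pos.2 hfs
      · intro t; exact abs_nonneg (f t)
    choose F hF0 hFpos hFnn using hcon'
    have pos0 : ∀ f : C₀(X, ℝ), (∀ t, 0 ≤ f t) → L f = 0 := by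
      intro f hf
      have hLf : 0 ≤ L f := by simpa using mono 0 f hf
      have hε : ∀ ε > 0, L f ≤ ‖L‖ * ε := by
        intro ε hε
        have hcomp : IsCompact {t | ε ≤ f t} := by
          have := (zero_at_infty f).eventually (gt_mem_nhds hε)
          obtain ⟨K, hK, hKs⟩ := mem_cocompact.1 this
          refine hK.of_isClosed_subset (isClosed_le continuous_const (map_continuous f)) ?_
          intro t ht
          by_contra htK
          exact (not_lt.2 (show ε ≤ f t from ht)) (hKs htK)
        obtain ⟨I, hI⟩ := hcomp.elim_finite_subcover (fun s : X => {t | 0 < F s t})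
          (fun s => isOpen_lt continuous_const (map_continuous (F s)))
          (fun t _ => Set.mem_iUnion.2 ⟨t, hFpos t⟩)
        set S : C₀(X, ℝ) := ∑ s ∈ I, F s with hS
        have hSapp : ∀ t, S t = ∑ s ∈ I, F s t := by
          intro t
          let ev : C₀(X, ℝ) →+ ℝ := ⟨⟨fun f => f t, rfl⟩, fun _ _ => rfl⟩
          exact map_sum ev F I
        have hSnn : ∀ t, 0 ≤ S t := fun t => by
          rw [hSapp]; exact Finset.sum_nonneg (fun s _ => hFnn s t)
        have hSpos : ∀ t, ε ≤ f t → 0 < S t := by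
          intro t ht
          obtain ⟨s, hs, hst⟩ := Set.mem_iUnion₂.1 (hI ht)
          rw [hSapp]
          exact Finset.sum_pos' (fun s _ => hFnn s t) ⟨s, hs, hst⟩
        have hLS : L S = 0 := by rw [hS, map_sum]; exact Finset.sum_eq_zero fun s _ => hF0 s
        obtain ⟨M, hM0, hM⟩ : ∃ M : ℝ, 0 ≤ M ∧ ∀ t, ε ≤ f t → f t ≤ M * S t := by
          rcases Set.eq_empty_or_nonempty {t | ε ≤ f t} with he | hne
          · exact ⟨0, le_rfl, fun t ht => by
              have : t ∈ {t | ε ≤ f t} := ht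
              rw [he] at this; exact this.elim⟩
          · obtain ⟨t0, ht0, hmin⟩ := hcomp.exists_isMinOn hne (map_continuous S).continuousOn
            have hp := hSpos t0 ht0
            refine ⟨‖f‖ / S t0, by positivity, fun t ht => ?_⟩
            have h1 : S t0 ≤ S t := hmin ht
            have h2 := (le_abs_self _).trans (abs_le_norm f t)
            rw [div_mul_eq_mul_div, le_div_iff₀ hp]
            exact mul_le_mul h2 h1 hp.le (norm_nonneg _)
        have h1 : L (trunc f ε hε.le) ≤ 0 := by
          have := mono (trunc f ε hε.le) (M • S) (by
            intro t
            change max (f t - ε) 0 ≤ M * S t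
            refine max_le ?_ (mul_nonneg hM0 (hSnn t))
            rcases le_or_gt ε (f t) with h | h
            · linarith [hM t h]
            · linarith [mul_nonneg hM0 (hSnn t)])
          simpa [hLS] using this
        have h2 : ‖f - trunc f ε hε.le‖ ≤ ε := by
          refine norm_le_of _ hε.le fun t => ?_
          change |f t - max (f t - ε) 0| ≤ ε
          have := hf t
          rcases le_total (f t - ε) 0 with h | h
          · rw [max_eq_right h, abs_le]; constructor <;> linarith
          · rw [max_eq_left h, abs_le]; constructor <;> linarith
        have h3 : L f - L (trunc f ε hε.le) ≤ ‖L‖ * ε := by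
          rw [← map_sub]
          exact (le_abs_self _).trans ((L.le_opNorm _).trans
            (mul_le_mul_of_nonneg_left h2 (norm_nonneg _)))
        linarith
      refine le_antisymm (le_of_forall_pos_le_add fun δ hδ => ?_) hLf
      have := hε (δ / (‖L‖ + 1)) (by positivity)
      have h4 : ‖L‖ * (δ / (‖L‖ + 1)) ≤ δ := by
        rw [← mul_div_assoc, div_le_iff₀ (by positivity)]
        nlinarith [norm_nonneg L]
      linarith
    apply h0
    ext f
    have := pos0 (c0sup f (-f)) (fun t => abs_nonneg (f t))
    rw [habs, abs_eq_zero] at this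
    simpa using this
  obtain ⟨s, hs⟩ := key
  obtain ⟨b, hb1, -, hbI⟩ := exists_bump s ∅ isClosed_empty (by simp)
  have hform : ∀ f, L f = L b * f s := by
    obtain ⟨g, hg⟩ : ∃ g, L g ≠ 0 := by
      by_contra! h; exact h0 (ContinuousLinearMap.ext h)
    have hgen : ∀ f, L g * f s = L f * g s := by
      intro f
      have := hs (L g • f - L f • g) (by simp [mul_comm])
      have h' : L g * f s - L f * g s = 0 := this
      linarith
    have hgs : g s ≠ 0 := by
      intro h
      have := hgen b
      rw [hb1, h] at this; simp at this; exact hg this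
    intro f
    have h1 := hgen b
    have h2 := hgen f
    rw [hb1] at h1
    apply mul_right_cancel₀ hgs
    rw [← h2]
    linear_combination (f s) * h1
  refine ⟨s, L b, ?_, hform⟩
  have h1 : 0 ≤ L b := by simpa using mono 0 b (fun t => (hbI t).1)
  refine lt_of_le_of_ne h1 fun h => h0 ?_
  ext f
  rw [hform, ← h]; simp

lemma sep [T2Space X] [LocallyCompactSpace X] {s t : X} (h : ∀ f : C₀(X, ℝ), f s ≠ 0 → f t ≠ 0) :
    s = t := by
  by_contra hne
  obtain ⟨f, h1, h0, -⟩ := exists_bump s {t} isClosed_singleton hne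
  exact h f (by rw [h1]; exact one_ne_zero) (h0 t rfl)

def evT (t : X) : C₀(X, ℝ) →L[ℝ] ℝ :=
  LinearMap.mkContinuous ⟨⟨fun f => f t, fun _ _ => rfl⟩, fun _ _ => rfl⟩ 1
    (fun f => by rw [one_mul]; exact abs_le_norm f t)

lemma evT_apply (t : X) (f : C₀(X, ℝ)) : evT t f = f t := rfl

/-- pointwise representation of a lattice isomorphism -/
lemma lattice_rep_aux [T2Space X] [LocallyCompactSpace X] (T : C₀(X, ℝ) ≃L[ℝ] C₀(X, ℝ))
    (hT : ∀ f g : C₀(X, ℝ), T (c0sup f g) = c0sup (T f) (T g)) :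
    ∃ (σ : X → X) (w : X → ℝ), (∀ t, 0 < w t) ∧ Continuous σ ∧ ∀ f t, T f t = w t * f (σ t) := by
  have : ∀ t : X, ∃ s : X, ∃ w : ℝ, 0 < w ∧ ∀ f, T f t = w * f s := by
    intro t
    refine functional_rep ((evT t).comp (T : C₀(X, ℝ) →L[ℝ] C₀(X, ℝ))) ?_ ?_
    · intro f g
      change (T (c0sup f g)) t = max (T f t) (T g t)
      rw [hT]; rfl
    · intro h
      obtain ⟨b, hb1, -⟩ := exists_bump t ∅ isClosed_empty (by simp)
      have h2 := DFunLike.congr_fun h (T.symm b)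
      have h3 : T (T.symm b) t = 0 := h2
      rw [T.apply_symm_apply, hb1] at h3
      exact one_ne_zero h3
  choose σ w hw hr using this
  refine ⟨σ, w, hw, ?_, fun f t => hr t f⟩
  rw [continuous_iff_continuousAt]
  intro t U hU
  obtain ⟨V, hVU, hVo, htV⟩ := mem_nhds_iff.1 hU
  obtain ⟨b, hb1, hb0, -⟩ := exists_bump (σ t) Vᶜ hVo.isClosed_compl (by simpa using htV)
  have hne : T b t ≠ 0 := by rw [hr, hb1, mul_one]; exact (hw t).ne'
  have := (map_continuous (T b)).continuousAt.eventually_ne hne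
  change ∀ᶠ t' in 𝓝 t, σ t' ∈ U
  filter_upwards [this] with t' ht'
  refine hVU ?_
  by_contra hc
  exact ht' (by rw [hr, hb0 _ hc, mul_zero])

lemma lattice_rep [T2Space X] [LocallyCompactSpace X] (T : C₀(X, ℝ) ≃L[ℝ] C₀(X, ℝ))
    (hT : ∀ f g : C₀(X, ℝ), T (c0sup f g) = c0sup (T f) (T g)) :
    ∃ (σ : X ≃ₜ X) (w v : X → ℝ), (∀ t, 0 < w t) ∧ (∀ t, w t * v (σ t) = 1) ∧
      (∀ f t, T f t = w t * f (σ t)) ∧ (∀ f t, T.symm f t = v t * f (σ.symm t)) := by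
  have hT' : ∀ f g : C₀(X, ℝ), T.symm (c0sup f g) = c0sup (T.symm f) (T.symm g) := by
    intro f g
    apply T.injective
    rw [hT]; simp
  obtain ⟨σ, w, hw, hσ, hr⟩ := lattice_rep_aux T hT
  obtain ⟨τ, v, hv, hτ, hs⟩ := lattice_rep_aux T.symm hT'
  have h1 : ∀ t, τ (σ t) = t := by
    intro t
    refine (sep fun f hf => ?_).symm
    have := hr (T.symm f) t
    rw [T.apply_symm_apply, hs] at this
    intro h; rw [h] at this; simp at this; exact hf this
  have h2 : ∀ t, σ (τ t) = t := by
    intro t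
    refine (sep fun f hf => ?_).symm
    have := hs (T f) t
    rw [T.symm_apply_apply, hr] at this
    intro h; rw [h] at this; simp at this; exact hf this
  refine ⟨⟨⟨σ, τ, h1, h2⟩, hσ, hτ⟩, w, v, hw, ?_, hr, hs⟩
  intro t
  obtain ⟨b, hb1, -⟩ := exists_bump t ∅ isClosed_empty (by simp)
  have := hr (T.symm b) t
  rw [T.apply_symm_apply, hs, h1, hb1] at this
  change w t * v (σ t) = 1
  linarith

lemma layer (a : ℕ → ℝ) (ha : StrictAnti a) (ha0 : ∀ j, 0 < a j) (I : Finset ℕ) (k : ℕ)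
    (hI : I.card ≤ k) : ∑ i ∈ I, a i ≤ ∑ i ∈ Finset.range k, a i ∧
      (∑ i ∈ Finset.range k, a i ≤ ∑ i ∈ I, a i → I = Finset.range k) := by
  have h1 : ∑ i ∈ I, (a i - a k) ≤ ∑ i ∈ I ∩ Finset.range k, (a i - a k) := by
    rw [← Finset.sum_inter_add_sum_sdiff I (Finset.range k)]
    have : ∑ i ∈ I \ Finset.range k, (a i - a k) ≤ 0 := by
      refine Finset.sum_nonpos fun i hi => ?_
      have hi' : k ≤ i := by
        simpa using (Finset.mem_sdiff.1 hi).2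
      linarith [ha.antitone hi']
    linarith
  have hpos : ∀ i ∈ Finset.range k, 0 < a i - a k := fun i hi => by
    linarith [ha (Finset.mem_range.1 hi)]
  have h2 : ∑ i ∈ I ∩ Finset.range k, (a i - a k) ≤ ∑ i ∈ Finset.range k, (a i - a k) :=
    Finset.sum_le_sum_of_subset_of_nonneg Finset.inter_subset_right
      (fun i hi _ => (hpos i hi).le)
  have h3 : (I.card : ℝ) * a k ≤ k * a k :=
    mul_le_mul_of_nonneg_right (by exact_mod_cast hI) (ha0 k).le
  have e1 : ∑ i ∈ I, (a i - a k) = ∑ i ∈ I, a i - I.card * a k := by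
    simp [Finset.sum_sub_distrib]
  have e2 : ∑ i ∈ Finset.range k, (a i - a k) = ∑ i ∈ Finset.range k, a i - k * a k := by
    simp [Finset.sum_sub_distrib]
  refine ⟨by linarith, fun hge => ?_⟩
  have hsub : Finset.range k ⊆ I := by
    intro i hi
    by_contra hiI
    have : ∑ i ∈ I ∩ Finset.range k, (a i - a k) < ∑ i ∈ Finset.range k, (a i - a k) :=
      Finset.sum_lt_sum_of_subset Finset.inter_subset_right hi
        (fun h => hiI (Finset.mem_inter.1 h).1) (hpos i hi) (fun j hj _ => (hpos j hj).le)
    linarith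
  exact (Finset.eq_of_subset_of_card_le hsub (by simpa using hI)).symm

/-- weighted sum seminorm -/
def Q (a : ℕ → ℝ) (p : ℕ → X) (y : C₀(X, ℝ)) : ℝ := ∑' j, a j * |y (p j)|

section Q
variable {a : ℕ → ℝ} {C : ℝ} (ha0 : ∀ j, 0 < a j) (hs : HasSum a C) (p : ℕ → X)
include ha0 hs

lemma Q_summable (y : C₀(X, ℝ)) : Summable fun j => a j * |y (p j)| :=
  Summable.of_nonneg_of_le (fun j => mul_nonneg (ha0 j).le (abs_nonneg _))
    (fun j => mul_le_mul_of_nonneg_left (abs_le_norm y (p j)) (ha0 j).le) (hs.summable.mul_right ‖y‖)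

omit hs in
lemma Q_nonneg (y : C₀(X, ℝ)) : 0 ≤ Q a p y :=
  tsum_nonneg fun j => mul_nonneg (ha0 j).le (abs_nonneg _)

lemma Q_mono (x y : C₀(X, ℝ)) (h : ∀ t, |x t| ≤ |y t|) : Q a p x ≤ Q a p y :=
  (Q_summable ha0 hs p x).tsum_le_tsum
    (fun j => mul_le_mul_of_nonneg_left (h _) (ha0 j).le) (Q_summable ha0 hs p y)

lemma Q_le (y : C₀(X, ℝ)) : Q a p y ≤ C * ‖y‖ := by
  rw [← hs.tsum_eq, ← tsum_mul_right]
  exact (Q_summable ha0 hs p y).tsum_le_tsum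
    (fun j => mul_le_mul_of_nonneg_left (abs_le_norm y (p j)) (ha0 j).le) (hs.summable.mul_right ‖y‖)

lemma Q_add (x y : C₀(X, ℝ)) : Q a p (x + y) ≤ Q a p x + Q a p y := by
  unfold Q
  rw [← (Q_summable ha0 hs p x).tsum_add (Q_summable ha0 hs p y)]
  refine (Q_summable ha0 hs p (x + y)).tsum_le_tsum (fun j => ?_)
    ((Q_summable ha0 hs p x).add (Q_summable ha0 hs p y))
  rw [← mul_add]
  exact mul_le_mul_of_nonneg_left (abs_add_le _ _) (ha0 j).le

omit ha0 hs in
lemma Q_smul (c : ℝ) (x : C₀(X, ℝ)) : Q a p (c • x) = |c| * Q a p x := by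
  unfold Q
  rw [← tsum_mul_left]
  congr 1; ext j
  change a j * |c * x (p j)| = _
  rw [abs_mul]; ring

lemma Q_cont : Continuous (Q a p) := by
  have hC : 0 ≤ C := hs.nonneg fun j => (ha0 j).le
  refine (LipschitzWith.of_le_add_mul ⟨C, hC⟩ fun x y => ?_).continuous
  have h1 := Q_add ha0 hs p y (x - y)
  have h2 := Q_le ha0 hs p (x - y)
  rw [add_sub_cancel] at h1
  rw [dist_eq_norm]
  change _ ≤ _ + C * _
  linarith
end Q

lemma norm_compOp_le (φ : X ≃ₜ X) (x : C₀(X, ℝ)) : ‖compOp φ x‖ ≤ ‖x‖ :=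
  norm_le_of _ (norm_nonneg _) fun t => abs_le_norm x (φ t)

lemma norm_compOp (φ : X ≃ₜ X) (x : C₀(X, ℝ)) : ‖compOp φ x‖ = ‖x‖ :=
  le_antisymm (norm_compOp_le φ x) (norm_le_of _ (norm_nonneg _) fun t => by
    have := abs_le_norm (compOp φ x) (φ.symm t)
    rwa [compOp_apply, φ.apply_symm_apply] at this)

def P (G : Set (X ≃ₜ X)) (a : ℕ → ℝ) (p : ℕ → X) (x : C₀(X, ℝ)) : ℝ :=
  sSup ((fun φ => Q a p (compOp φ x)) '' G)

def NN (G : Set (X ≃ₜ X)) (a : ℕ → ℝ) (p : ℕ → X) (x : C₀(X, ℝ)) : ℝ :=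
  max ‖x‖ (P G a p x)

section P
variable {a : ℕ → ℝ} {C : ℝ} (ha0 : ∀ j, 0 < a j) (hs : HasSum a C) (p : ℕ → X)
  (G : Set (X ≃ₜ X)) (h_id : Homeomorph.refl X ∈ G)
include ha0 hs

lemma le_P (x : C₀(X, ℝ)) {φ : X ≃ₜ X} (hφ : φ ∈ G) : Q a p (compOp φ x) ≤ P G a p x := by
  refine le_csSup ⟨C * ‖x‖, ?_⟩ ⟨φ, hφ, rfl⟩
  rintro _ ⟨ψ, -, rfl⟩
  have := Q_le ha0 hs p (compOp ψ x)
  rwa [norm_compOp] at this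

include h_id
omit ha0 hs in
lemma P_le (x : C₀(X, ℝ)) {c : ℝ} (h : ∀ φ ∈ G, Q a p (compOp φ x) ≤ c) : P G a p x ≤ c := by
  refine csSup_le ⟨_, _, h_id, rfl⟩ ?_
  rintro _ ⟨ψ, hψ, rfl⟩
  exact h ψ hψ

lemma NN_add (x y : C₀(X, ℝ)) : NN G a p (x + y) ≤ NN G a p x + NN G a p y := by
  refine max_le ((norm_add_le x y).trans (add_le_add (le_max_left _ _) (le_max_left _ _))) ?_
  refine (P_le p G h_id _ fun φ hφ => ?_).trans (add_le_add (le_max_right _ _) (le_max_right _ _))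
  exact (Q_add ha0 hs p (compOp φ x) (compOp φ y)).trans
    (add_le_add (le_P ha0 hs p G x hφ) (le_P ha0 hs p G y hφ))

lemma NN_smul_le (c : ℝ) (x : C₀(X, ℝ)) : NN G a p (c • x) ≤ |c| * NN G a p x := by
  refine max_le ?_ ?_
  · rw [norm_smul]; exact mul_le_mul_of_nonneg_left (le_max_left _ _) (abs_nonneg c)
  · refine P_le p G h_id _ fun φ hφ => ?_
    have : compOp φ (c • x) = c • compOp φ x := rfl
    rw [this, Q_smul]
    exact mul_le_mul_of_nonneg_left ((le_P ha0 hs p G x hφ).trans (le_max_right _ _)) (abs_nonneg c)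

lemma NN_smul (c : ℝ) (x : C₀(X, ℝ)) : NN G a p (c • x) = |c| * NN G a p x := by
  refine le_antisymm (NN_smul_le ha0 hs p G h_id c x) ?_
  rcases eq_or_ne c 0 with rfl | hc
  · simp only [abs_zero, zero_mul]; exact (norm_nonneg _).trans (le_max_left _ _)
  · have h := NN_smul_le ha0 hs p G h_id c⁻¹ (c • x)
    rw [smul_smul, inv_mul_cancel₀ hc, one_smul, abs_inv] at h
    have hp : 0 < |c| := abs_pos.2 hc
    rw [inv_mul_eq_div, le_div_iff₀ hp] at h
    linarith

lemma NN_mono (x y : C₀(X, ℝ)) (h : ∀ t, |x t| ≤ |y t|) : NN G a p x ≤ NN G a p y := by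
  refine max_le ((norm_le_of _ (norm_nonneg _) fun t => (h t).trans (abs_le_norm y t)).trans
    (le_max_left _ _)) ?_
  refine (P_le p G h_id _ fun φ hφ => ?_).trans (le_max_right _ _)
  exact (Q_mono ha0 hs p _ _ fun t => h (φ t)).trans (le_P ha0 hs p G y hφ)

lemma NN_le (hC : 1 ≤ C) (x : C₀(X, ℝ)) : NN G a p x ≤ C * ‖x‖ := by
  refine max_le (le_mul_of_one_le_left (norm_nonneg _) hC) (P_le p G h_id _ fun φ _ => ?_)
  have := Q_le ha0 hs p (compOp φ x)
  rwa [norm_compOp] at this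

lemma NN_inv_le (h_comp : ∀ φ ∈ G, ∀ ψ ∈ G, φ.trans ψ ∈ G) {φ : X ≃ₜ X} (hφ : φ ∈ G)
    (x : C₀(X, ℝ)) : NN G a p (compOp φ x) ≤ NN G a p x := by
  refine max_le ((norm_compOp_le φ x).trans (le_max_left _ _)) ?_
  refine (P_le p G h_id _ fun ψ hψ => ?_).trans (le_max_right _ _)
  exact le_P ha0 hs p G x (h_comp ψ hψ φ hφ)

lemma NN_inv (h_comp : ∀ φ ∈ G, ∀ ψ ∈ G, φ.trans ψ ∈ G) (h_inv : ∀ φ ∈ G, φ.symm ∈ G)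
    {φ : X ≃ₜ X} (hφ : φ ∈ G) (x : C₀(X, ℝ)) : NN G a p (compOp φ x) = NN G a p x := by
  refine le_antisymm (NN_inv_le ha0 hs p G h_id h_comp hφ x) ?_
  have := NN_inv_le ha0 hs p G h_id h_comp (h_inv φ hφ) (compOp φ x)
  have e : compOp φ.symm (compOp φ x) = x := by
    ext t; simp [compOp_apply]
  rwa [e] at this

/-- bump functions at generic points have norm at most one -/
lemma generic [T2Space X] [LocallyCompactSpace X] (s : X)
    (h : ∀ j, s ∉ closure {z : X | ∃ φ ∈ G, φ (p j) = z}) :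
    ∃ x : C₀(X, ℝ), x s = 1 ∧ NN G a p x ≤ 1 := by
  obtain ⟨m, hm⟩ : ∃ m, ∑' j, a (j + m) ≤ 1 := by
    have := (tendsto_sum_nat_add a).eventually (gt_mem_nhds (zero_lt_one' ℝ))
    obtain ⟨m, hm⟩ := this.exists
    exact ⟨m, hm.le⟩
  obtain ⟨x, hx1, hx0, hxI⟩ := exists_bump s
    (⋃ j ∈ Finset.range m, closure {z : X | ∃ φ ∈ G, φ (p j) = z})
    (isClosed_biUnion_finset fun j _ => isClosed_closure) (by
      simp only [Set.mem_iUnion, not_exists]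
      intro j _; exact h j)
  refine ⟨x, hx1, max_le (norm_le_of _ zero_le_one fun t => ?_) (P_le p G h_id _ fun φ hφ => ?_)⟩
  · rw [abs_of_nonneg (hxI t).1]; exact (hxI t).2
  · unfold Q
    have hsum := Q_summable ha0 hs p (compOp φ x)
    rw [← hsum.sum_add_tsum_nat_add m]
    rw [Finset.sum_eq_zero, zero_add]
    · refine le_trans (Summable.tsum_le_tsum (fun j => ?_) ((summable_nat_add_iff m).2 hsum)
        ((summable_nat_add_iff m).2 hs.summable)) hm
      rw [compOp_apply, abs_of_nonneg (hxI _).1]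
      exact mul_le_of_le_one_right (ha0 _).le (hxI _).2
    · intro j hj
      have : x (φ (p j)) = 0 := hx0 _ (Set.mem_biUnion hj (subset_closure ⟨φ, hφ, rfl⟩))
      rw [compOp_apply, this, abs_zero, mul_zero]

end P

lemma stage [T2Space X] [LocallyCompactSpace X] [FirstCountableTopology X]
    {a : ℕ → ℝ} {C : ℝ} (ha0 : ∀ j, 0 < a j) (hs : HasSum a C)
    (p : ℕ → X) (G : Set (X ≃ₜ X)) (h_id : Homeomorph.refl X ∈ G)
    (ha : StrictAnti a) (ha1 : 1 < a 0) (hp : Function.Injective p)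
    (h_cpt : IsCompact ((fun φ : X ≃ₜ X => (compOp φ : C₀(X, ℝ) → C₀(X, ℝ))) '' G))
    (σ : X ≃ₜ X) (hσ : ∀ f, NN G a p (compOp σ f) = NN G a p f) (n : ℕ) :
    ∃ ψ ∈ G, ∀ j < n, ψ (p j) = σ (p j) := by
  classical
  rcases Nat.eq_zero_or_pos n with rfl | hn
  · exact ⟨_, h_id, fun j hj => absurd hj (Nat.not_lt_zero j)⟩
  let A : ℕ → Finset X := fun k => (Finset.range (k + 1)).image fun j => σ (p j)
  have hg : ∀ k, ∃ g : C(X, ℝ), (A k : Set X) = g ⁻¹' {1} ∧ HasCompactSupport g ∧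
      ∀ x, g x ∈ Set.Icc (0 : ℝ) 1 := by
    intro k
    obtain ⟨g, h1, -, h2, h3⟩ := exists_continuous_one_zero_of_isCompact_of_isGδ
      (A k).finite_toSet.isCompact (A k).finite_toSet.isGδ isClosed_empty (Set.disjoint_empty _)
    exact ⟨g, h1, h2, h3⟩
  choose g hg1 hgc hgI using hg
  have hgA : ∀ k x, x ∈ A k → g k x = 1 := fun k x hx => by
    have : x ∈ (A k : Set X) := hx
    rw [hg1] at this; exact this
  have hgA' : ∀ k x, x ∉ A k → g k x < 1 := fun k x hx => by
    refine lt_of_le_of_ne (hgI k x).2 fun h => hx ?_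
    have : x ∈ (A k : Set X) := by rw [hg1]; exact h
    exact this
  have hpc : ∀ k m, HasCompactSupport ((g k) ^ (m + 1) : C(X, ℝ)) := fun k m =>
    (hgc k).comp_left (g := fun u : ℝ => u ^ (m + 1)) (by simp)
  let f : ℕ → C₀(X, ℝ) := fun m => ∑ k ∈ Finset.range n, ofCS ((g k) ^ (m + 1)) (hpc k m)
  have hf : ∀ m x, f m x = ∑ k ∈ Finset.range n, (g k x) ^ (m + 1) := by
    intro m x
    rw [← evT_apply, map_sum]; rfl
  have hf0 : ∀ m x, 0 ≤ f m x := fun m x => by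
    rw [hf]; exact Finset.sum_nonneg fun k _ => pow_nonneg (hgI k x).1 _
  have hfn : ∀ m, ‖f m‖ ≤ n := fun m => by
    refine norm_le_of _ (by positivity) fun x => ?_
    rw [abs_of_nonneg (hf0 m x), hf]
    refine (Finset.sum_le_sum (g := fun _ => (1 : ℝ)) fun k _ => ?_).trans (by simp)
    exact pow_le_one₀ (hgI k x).1 (hgI k x).2
  have hfanti : ∀ m x, f (m + 1) x ≤ f m x := fun m x => by
    rw [hf, hf]
    exact Finset.sum_le_sum fun k _ =>
      pow_le_pow_of_le_one (hgI k x).1 (hgI k x).2 (Nat.le_succ _)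
  set S : ℝ := ∑ k ∈ Finset.range n, ∑ i ∈ Finset.range (k + 1), a i with hS
  have hSn : (n : ℝ) < S := by
    have : (n : ℝ) = ∑ k ∈ Finset.range n, (1 : ℝ) := by simp
    rw [this]
    refine Finset.sum_lt_sum_of_nonempty (by simpa using hn.ne') fun k _ => ?_
    refine ha1.trans_le ?_
    exact Finset.single_le_sum (f := a) (fun i _ => (ha0 i).le) (by simp)
  -- Q as a sum of layers
  have hQ : ∀ (φ : X ≃ₜ X) m, HasSum (fun i => ∑ k ∈ Finset.range n, a i * (g k (φ (p i))) ^ (m + 1))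
      (Q a p (compOp φ (f m))) := by
    intro φ m
    have : HasSum _ (Q a p (compOp φ (f m))) := (Q_summable ha0 hs p (compOp φ (f m))).hasSum
    convert this using 2 with i
    rw [compOp_apply, abs_of_nonneg (hf0 _ _), hf, Finset.mul_sum]
  have hlay : ∀ (φ : X ≃ₜ X) m k, Summable fun i => a i * (g k (φ (p i))) ^ (m + 1) := by
    intro φ m k
    refine Summable.of_nonneg_of_le (fun i => mul_nonneg (ha0 i).le (pow_nonneg (hgI _ _).1 _))
      (fun i => mul_le_of_le_one_right (ha0 i).le (pow_le_one₀ (hgI _ _).1 (hgI _ _).2)) hs.summable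
  have hQ' : ∀ (φ : X ≃ₜ X) m, Q a p (compOp φ (f m)) =
      ∑ k ∈ Finset.range n, ∑' i, a i * (g k (φ (p i))) ^ (m + 1) := by
    intro φ m
    rw [← Summable.tsum_finsetSum (fun k _ => hlay φ m k)]
    exact (hQ φ m).tsum_eq.symm
  have hSQ : ∀ m, S ≤ Q a p (compOp σ (f m)) := by
    intro m
    rw [hQ']
    refine Finset.sum_le_sum fun k _ => ?_
    refine le_trans (Finset.sum_le_sum fun i hi => ?_) ((hlay σ m k).sum_le_tsum
      (Finset.range (k + 1)) (fun i _ => mul_nonneg (ha0 i).le (pow_nonneg (hgI _ _).1 _)))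
    rw [hgA k (σ (p i)) (Finset.mem_image_of_mem _ hi), one_pow, mul_one]
  have hQc : ∀ m, Continuous fun R : C₀(X, ℝ) → C₀(X, ℝ) => Q a p (R (f m)) := fun m =>
    (Q_cont ha0 hs p).comp (continuous_apply (f m))
  have hSP : ∀ m, ∃ φ ∈ G, S ≤ Q a p (compOp φ (f m)) := by
    intro m
    obtain ⟨R, ⟨φ, hφ, rfl⟩, hmax⟩ := h_cpt.exists_isMaxOn ⟨_, _, h_id, rfl⟩ (hQc m).continuousOn
    refine ⟨φ, hφ, ?_⟩
    have h1 : P G a p (f m) ≤ Q a p (compOp φ (f m)) :=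
      P_le p G h_id _ fun ψ hψ => hmax ⟨ψ, hψ, rfl⟩
    have h2 : S ≤ NN G a p (f m) := by
      rw [← hσ]
      refine (hSQ m).trans (le_trans ?_ (le_max_right _ _))
      exact le_P ha0 hs p G (compOp σ (f m)) h_id
    rcases le_max_iff.1 h2 with h | h
    · linarith [hfn m]
    · exact h.trans h1
  obtain ⟨R, hR⟩ := IsCompact.nonempty_iInter_of_sequence_nonempty_isCompact_isClosed
    (fun m => ((fun φ : X ≃ₜ X => (compOp φ : C₀(X, ℝ) → C₀(X, ℝ))) '' G) ∩
      {R | S ≤ Q a p (R (f m))})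
    (by
      rintro m _ ⟨⟨φ, hφ, rfl⟩, h⟩
      refine ⟨⟨φ, hφ, rfl⟩, le_trans (b := Q a p (compOp φ (f (m + 1)))) h
        (Q_mono ha0 hs p _ _ fun t => ?_)⟩
      rw [compOp_apply, compOp_apply, abs_of_nonneg (hf0 _ _), abs_of_nonneg (hf0 _ _)]
      exact hfanti _ _)
    (fun m => by
      obtain ⟨φ, hφ, h⟩ := hSP m
      exact ⟨_, ⟨φ, hφ, rfl⟩, h⟩)
    (h_cpt.inter_right (isClosed_le continuous_const (hQc 0)))
    (fun m => h_cpt.isClosed.inter (isClosed_le continuous_const (hQc m)))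
  rw [Set.mem_iInter] at hR
  obtain ⟨ψ, hψ, rfl⟩ := (hR 0).1
  have hψQ : ∀ m, S ≤ Q a p (compOp ψ (f m)) := fun m => (hR m).2
  refine ⟨ψ, hψ, ?_⟩
  -- the index sets
  have hinj : Function.Injective fun i => ψ (p i) := ψ.injective.comp hp
  let I : ℕ → Finset ℕ := fun k => (A k).preimage (fun i => ψ (p i)) hinj.injOn
  have hIm : ∀ k i, i ∈ I k ↔ ψ (p i) ∈ A k := fun k i => Finset.mem_preimage
  have hIc : ∀ k, (I k).card ≤ k + 1 := by
    intro k
    have h1 : (I k).card ≤ (A k).card :=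
      Finset.card_le_card_of_injOn (fun i => ψ (p i)) (fun i hi => (hIm k i).1 hi) hinj.injOn
    have h2 : (A k).card ≤ (Finset.range (k + 1)).card := Finset.card_image_le
    rw [Finset.card_range] at h2
    exact h1.trans h2
  have hlim : ∀ k, Tendsto (fun m : ℕ => ∑' i, a i * (g k (ψ (p i))) ^ (m + 1)) atTop
      (𝓝 (∑ i ∈ I k, a i)) := by
    intro k
    have e : ∑ i ∈ I k, a i = ∑' i, if i ∈ I k then a i else 0 := by
      rw [tsum_eq_sum (s := I k) (fun i hi => if_neg hi)]
      exact Finset.sum_congr rfl fun i hi => (if_pos hi).symm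
    rw [e]
    refine tendsto_tsum_of_dominated_convergence hs.summable (fun i => ?_)
      (Eventually.of_forall fun m i => ?_)
    · by_cases hi : i ∈ I k
      · rw [if_pos hi]
        simp only [hgA k _ ((hIm k i).1 hi), one_pow, mul_one]
        exact tendsto_const_nhds
      · rw [if_neg hi]
        have := (tendsto_pow_atTop_nhds_zero_of_lt_one (hgI k (ψ (p i))).1
          (hgA' k _ (fun h => hi ((hIm k i).2 h)))).comp (tendsto_add_atTop_nat 1)
        simpa using this.const_mul (a i)
    · rw [Real.norm_of_nonneg (mul_nonneg (ha0 i).le (pow_nonneg (hgI _ _).1 _))]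
      exact mul_le_of_le_one_right (ha0 i).le (pow_le_one₀ (hgI _ _).1 (hgI _ _).2)
  have hfin : S ≤ ∑ k ∈ Finset.range n, ∑ i ∈ I k, a i := by
    refine ge_of_tendsto' (tendsto_finsetSum (Finset.range n) fun k _ => hlim k) fun m => ?_
    rw [← hQ']; exact hψQ m
  have hle : ∀ k ∈ Finset.range n, ∑ i ∈ I k, a i ≤ ∑ i ∈ Finset.range (k + 1), a i :=
    fun k _ => (layer a ha ha0 (I k) (k + 1) (hIc k)).1
  have heq := (Finset.sum_eq_sum_iff_of_le hle).1 (le_antisymm (Finset.sum_le_sum hle) hfin)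
  have hIk : ∀ k < n, I k = Finset.range (k + 1) := fun k hk =>
    (layer a ha ha0 (I k) (k + 1) (hIc k)).2 (heq k (Finset.mem_range.2 hk)).ge
  intro j hj
  have h1 : ψ (p j) ∈ A j := (hIm j j).1 (by rw [hIk j hj]; simp)
  obtain ⟨i, hi, hij⟩ := Finset.mem_image.1 h1
  rcases Nat.lt_succ_iff_lt_or_eq.1 (Finset.mem_range.1 hi) with h | h
  · exfalso
    have hmem : j ∈ I (j - 1) := by
      rw [hIm, ← hij]
      exact Finset.mem_image_of_mem (fun j => σ (p j)) (Finset.mem_range.2 (by omega))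
    rw [hIk (j - 1) (by omega), Finset.mem_range] at hmem
    omega
  · rw [← hij, h]

lemma exists_seq [T2Space X] [SecondCountableTopology X] [Nonempty X] (G : Set (X ≃ₜ X))
    (h_id : Homeomorph.refl X ∈ G)
    (h_nd : ∀ t : X, IsNowhereDense {z : X | ∃ φ ∈ G, φ t = z}) :
    ∃ p : ℕ → X, Function.Injective p ∧ DenseRange p := by
  obtain ⟨D, hDc, hDd⟩ := TopologicalSpace.exists_countable_dense X
  have hDi : D.Infinite := by
    intro hfin
    have huniv : D = Set.univ := by rw [← hfin.isClosed.closure_eq]; exact hDd.closure_eq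
    have : Finite X := Set.finite_univ_iff.1 (huniv ▸ hfin)
    obtain ⟨t⟩ := ‹Nonempty X›
    have h := h_nd t
    have hmem : t ∈ {z : X | ∃ φ ∈ G, φ t = z} := ⟨_, h_id, rfl⟩
    have h2 : t ∈ interior (closure {z : X | ∃ φ ∈ G, φ t = z}) := by
      rw [(isOpen_discrete _).interior_eq]; exact subset_closure hmem
    rw [IsNowhereDense] at h
    rw [h] at h2; exact h2
  have := hDc.to_subtype
  have := hDi.to_subtype
  obtain ⟨e⟩ := nonempty_equiv_of_countable (α := ℕ) (β := D)
  refine ⟨fun n => e n, Subtype.val_injective.comp e.injective, ?_⟩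
  have : Set.range (fun n => (e n : X)) = D := by
    ext x; constructor
    · rintro ⟨n, rfl⟩; exact (e n).2
    · intro hx; exact ⟨e.symm ⟨x, hx⟩, by simp⟩
  rw [DenseRange, this]; exact hDd

end Stmt12

/-- **Proposition 5.1.** Let `X` be a locally compact Polish space and `G` a group of
homeomorphisms of `X` such that the set of composition operators `{C_φ : φ ∈ G}` is
SOT-compact (compact in the topology of pointwise norm convergence) and all orbits are
nowhere dense. Then for every `C > 1` there is an equivalent lattice norm `N` on `C₀(X)`,
with `‖·‖ ≤ N ≤ C‖·‖`, invariant under `G`, whose lattice isometries are exactly the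
composition operators coming from `G`. -/
theorem stmt12 {X : Type*} [TopologicalSpace X] [PolishSpace X] [LocallyCompactSpace X]
    (G : Set (X ≃ₜ X)) (h_id : Homeomorph.refl X ∈ G)
    (h_comp : ∀ φ ∈ G, ∀ ψ ∈ G, φ.trans ψ ∈ G) (h_inv : ∀ φ ∈ G, φ.symm ∈ G)
    (h_cpt : IsCompact
      ((fun φ : X ≃ₜ X => (compOp φ : C₀(X, ℝ) → C₀(X, ℝ))) '' G))
    (h_nd : ∀ t : X, IsNowhereDense {z : X | ∃ φ ∈ G, φ t = z}) :
    ∀ C : ℝ, 1 < C → ∃ N : C₀(X, ℝ) → ℝ,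
      (∀ x y : C₀(X, ℝ), N (x + y) ≤ N x + N y) ∧
      (∀ (c : ℝ) (x : C₀(X, ℝ)), N (c • x) = |c| * N x) ∧
      (∀ x y : C₀(X, ℝ), (∀ t, |x t| ≤ |y t|) → N x ≤ N y) ∧
      (∀ x : C₀(X, ℝ), ‖x‖ ≤ N x ∧ N x ≤ C * ‖x‖) ∧
      (∀ φ ∈ G, ∀ x : C₀(X, ℝ), N (compOp φ x) = N x) ∧
      (∀ T : C₀(X, ℝ) ≃L[ℝ] C₀(X, ℝ),
        (∀ f g : C₀(X, ℝ), T (c0sup f g) = c0sup (T f) (T g)) →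
        (∀ x : C₀(X, ℝ), N (T x) = N x) →
        ∃ φ ∈ G, ∀ f : C₀(X, ℝ), T f = compOp φ f) := by
  intro C hC
  rcases isEmpty_or_nonempty X with hX | hX
  · refine ⟨fun x => ‖x‖, norm_add_le, fun c x => norm_smul c x,
      fun x y h => Stmt12.norm_le_of _ (norm_nonneg _) fun t => (h t).trans (Stmt12.abs_le_norm y t),
      fun x => ⟨le_rfl, le_mul_of_one_le_left (norm_nonneg _) hC.le⟩,
      fun φ _ x => Stmt12.norm_compOp φ x, fun T _ _ => ⟨_, h_id, fun f => ?_⟩⟩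
    ext t; exact hX.elim t
  obtain ⟨p, hp, hpd⟩ := Stmt12.exists_seq G h_id h_nd
  obtain ⟨a, ha0, hs, ha, ha1⟩ : ∃ a : ℕ → ℝ, (∀ j, 0 < a j) ∧ HasSum a C ∧ StrictAnti a ∧
      1 < a 0 := by
    have hC0 : 0 < C := by linarith
    set A : ℝ := (1 + C) / 2 with hA
    have hA1 : 1 < A := by rw [hA]; linarith
    have hAC : A < C := by rw [hA]; linarith
    set r : ℝ := 1 - A / C with hr
    have hq : A / C < 1 := (div_lt_one hC0).2 hAC
    have hq0 : 0 < A / C := by positivity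
    have hr0 : 0 < r := by rw [hr]; linarith
    have hr1 : r < 1 := by rw [hr]; linarith
    refine ⟨fun j => A * r ^ j, fun j => by positivity, ?_, ?_, by simpa using hA1⟩
    · have := (hasSum_geometric_of_lt_one hr0.le hr1).mul_left A
      have e : A * (1 - r)⁻¹ = C := by
        have : 1 - r = A / C := by rw [hr]; ring
        rw [this]; field_simp
      rwa [e] at this
    · exact (pow_right_strictAnti₀ hr0 hr1).const_mul (by linarith)
  refine ⟨Stmt12.NN G a p, Stmt12.NN_add ha0 hs p G h_id, Stmt12.NN_smul ha0 hs p G h_id,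
    Stmt12.NN_mono ha0 hs p G h_id,
    fun x => ⟨le_max_left _ _, Stmt12.NN_le ha0 hs p G h_id hC.le x⟩,
    fun φ hφ x => Stmt12.NN_inv ha0 hs p G h_id h_comp h_inv hφ x, ?_⟩
  intro T hT hTN
  obtain ⟨σ, w, v, hw, hwv, hr, hr'⟩ := Stmt12.lattice_rep T hT
  -- the set of generic points
  let O : ℕ → Set X := fun j => (closure {z : X | ∃ φ ∈ G, φ (p j) = z})ᶜ
  have hOo : ∀ j, IsOpen (O j) := fun j => isClosed_closure.isOpen_compl
  have hOd : ∀ j, Dense (O j) := fun j => interior_eq_empty_iff_dense_compl.1 (h_nd (p j))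
  have hdense : Dense (⋂ j, O j ∩ σ ⁻¹' (O j)) := by
    refine dense_iInter_of_isOpen (fun j => (hOo j).inter ((hOo j).preimage σ.continuous))
      fun j => ?_
    exact (hOd j).inter_of_isOpen_left ((hOd j).preimage σ.isOpenMap) (hOo j)
  have hw1 : ∀ t ∈ ⋂ j, O j ∩ σ ⁻¹' (O j), w t = 1 := by
    intro t ht
    rw [Set.mem_iInter] at ht
    obtain ⟨x, hx1, hxN⟩ := Stmt12.generic ha0 hs p G h_id (σ t) (fun j => (ht j).2)
    obtain ⟨y, hy1, hyN⟩ := Stmt12.generic ha0 hs p G h_id t (fun j => (ht j).1)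
    have h1 : w t ≤ 1 := by
      have e : T x t = w t := by rw [hr, hx1, mul_one]
      have := (le_abs_self _).trans (Stmt12.abs_le_norm (T x) t)
      have h2 : ‖T x‖ ≤ Stmt12.NN G a p (T x) := le_max_left _ _
      rw [hTN] at h2
      linarith
    have h2 : v (σ t) ≤ 1 := by
      have e : T.symm y (σ t) = v (σ t) := by rw [hr', σ.symm_apply_apply, hy1, mul_one]
      have := (le_abs_self _).trans (Stmt12.abs_le_norm (T.symm y) (σ t))
      have h2 : ‖T.symm y‖ ≤ Stmt12.NN G a p (T.symm y) := le_max_left _ _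
      rw [← hTN, T.apply_symm_apply] at h2
      linarith
    have h3 := hwv t
    have h4 := hw t
    nlinarith
  have hTσ : ∀ f, T f = compOp σ f := by
    intro f
    apply DFunLike.coe_injective
    refine Continuous.ext_on hdense (map_continuous (T f)) (map_continuous (compOp σ f)) ?_
    intro t ht
    rw [hr, hw1 t ht, one_mul]; rfl
  have hσN : ∀ f, Stmt12.NN G a p (compOp σ f) = Stmt12.NN G a p f := fun f => by
    rw [← hTσ, hTN]
  have hstage := Stmt12.stage ha0 hs p G h_id ha ha1 hp h_cpt σ hσN
  have hcl : ∀ n, IsClosed {R : C₀(X, ℝ) → C₀(X, ℝ) | ∀ j < n, ∀ f, R f (p j) = f (σ (p j))} := by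
    intro n
    simp only [Set.ofPred_forall]
    refine isClosed_iInter fun j => isClosed_iInter fun _ => isClosed_iInter fun f => ?_
    exact isClosed_eq ((Stmt12.evT (p j)).continuous.comp (continuous_apply f)) continuous_const
  obtain ⟨R, hR⟩ := IsCompact.nonempty_iInter_of_sequence_nonempty_isCompact_isClosed
    (fun n => ((fun φ : X ≃ₜ X => (compOp φ : C₀(X, ℝ) → C₀(X, ℝ))) '' G) ∩
      {R | ∀ j < n, ∀ f, R f (p j) = f (σ (p j))})
    (fun n R h => ⟨h.1, fun j hj => h.2 j (by omega)⟩)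
    (fun n => by
      obtain ⟨ψ, hψ, h⟩ := hstage n
      exact ⟨_, ⟨ψ, hψ, rfl⟩, fun j hj f => by rw [Stmt12.compOp_apply, h j hj]⟩)
    (h_cpt.inter_right (hcl 0))
    (fun n => h_cpt.isClosed.inter (hcl n))
  rw [Set.mem_iInter] at hR
  obtain ⟨ψ, hψ, rfl⟩ := (hR 0).1
  refine ⟨ψ, hψ, fun f => ?_⟩
  rw [hTσ]
  apply DFunLike.coe_injective
  refine Continuous.ext_on hpd (map_continuous _) (map_continuous _) ?_
  rintro _ ⟨j, rfl⟩
  exact ((hR (j + 1)).2 j (Nat.lt_succ_self j) f).symm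

end
end
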